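/- Let p_1 < p_2 < ... denote the sequence of all primes, let k ≥ 0 and r ≥ 1 be integers, and for n ≥ 1 let J_r(n) = ∑_{d | n} μ(n/d)·d^r denote the Jordan totient of order r. Then the limit as N → ∞ of (∑_{i=1}^N p_i^k · J_r(p_i − 1)) / (∑_{i=1}^N p_i^k · (p_i − 1)^r) exists and equals the rank-r Artin constant A_r = ∏_p (1 − 1/(p^r (p − 1))), the infinite product over all primes p. -/

import Mathlib

open Filter

/-- The Jordan totient `J_r(n) = ∑_{d | n} μ(n/d) d^r`. -/
def jordanTotient (r n : ℕ) : ℤ :=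
  ∑ d ∈ n.divisors, ArithmeticFunction.moebius (n / d) * (d : ℤ) ^ r

/-- The rank-`r` Artin constant `A_r = ∏_p (1 - 1/(p^r (p - 1)))`, product over all primes. -/
noncomputable def artinConstantRank (r : ℕ) : ℝ :=
  ∏' p : Nat.Primes, (1 - 1 / (((p : ℕ) : ℝ) ^ r * (((p : ℕ) : ℝ) - 1)))


section Helpers

open MeasureTheory FourierTransform


lemma fourier_comp_div (k : ℝ → ℂ) {l : ℝ} (hl : 0 < l) (v : ℝ) :
    𝓕 (fun t : ℝ => k (t / l)) v = l * 𝓕 k (l * v) := by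
  rw [Real.fourier_real_eq_integral_exp_smul, Real.fourier_real_eq_integral_exp_smul]
  have := Measure.integral_comp_div (fun t : ℝ => Complex.exp (↑(-2 * Real.pi * t * (l * v)) * Complex.I) • k t) l
  rw [abs_of_pos hl] at this
  rw [← Complex.real_smul, ← this]
  congr 1
  ext t
  congr 4
  field_simp

lemma exists_kernel {ε : ℝ} (hε : 0 < ε) : ∃ k : ℝ → ℂ, Continuous k ∧ HasCompactSupport k ∧
    Integrable (𝓕 k) ∧ ∫ v, 𝓕 k v = 1 ∧ Integrable (fun v : ℝ => |v| * ‖𝓕 k v‖) ∧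
    ∫ v : ℝ, |v| * ‖𝓕 k v‖ ≤ ε := by
  let f : ContDiffBump (0 : ℝ) := ⟨1, 2, by norm_num, by norm_num⟩
  have hc : HasCompactSupport (fun t => (f t : ℂ)) := f.hasCompactSupport.comp_left (g := fun x : ℝ => (x:ℂ)) (by simp)
  have hd : ContDiff ℝ (⊤ : ℕ∞) (fun t => (f t : ℂ)) := Complex.ofRealCLM.contDiff.comp f.contDiff
  let S := hc.toSchwartzMap hd
  let k0 : ℝ → ℂ := fun t => (f t : ℂ)
  have hS : ∀ v, 𝓕 k0 v = (𝓕 S) v := fun v => by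
    rw [SchwartzMap.fourier_coe]; rfl
  have hS' : 𝓕 k0 = (𝓕 S : SchwartzMap ℝ ℂ) := funext hS
  have hi1 : Integrable (𝓕 k0) := by rw [hS']; exact (𝓕 S).integrable
  have hi2 : Integrable (fun v : ℝ => |v| * ‖𝓕 k0 v‖) := by
    
    refine ((𝓕 S).integrable_pow_mul volume 1).congr (Eventually.of_forall fun v => ?_)
    simp only [hS, pow_one, Real.norm_eq_abs]
  have hInteg0 : ∫ v, 𝓕 k0 v = 1 := by
    have h := Continuous.fourierInv_fourier_eq (f := k0) hd.continuous (hd.continuous.integrable_of_hasCompactSupport hc) hi1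
    have h0 := congrFun h 0
    rw [Real.fourierInv_eq'] at h0
    simp at h0
    rw [h0]
    have : f 0 = 1 := f.one_of_mem_closedBall (by simp [f])
    simp [k0, this]
  set I := ∫ v : ℝ, |v| * ‖𝓕 k0 v‖ with hI
  have hI0 : 0 ≤ I := integral_nonneg (fun v => by positivity)
  set l := I / ε + 1 with hl
  have hlp : 0 < l := by positivity
  refine ⟨fun t => k0 (t / l), hd.continuous.comp (by fun_prop), ?_, ?_⟩
  · have : (fun t => k0 (t / l)) = (fun t => k0 (l⁻¹ • t)) := by
      ext t; rw [smul_eq_mul, div_eq_inv_mul]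
    rw [this]
    exact hc.comp_smul (by positivity)
  have e : 𝓕 (fun t => k0 (t / l)) = fun v => l * 𝓕 k0 (l * v) := funext fun v => fourier_comp_div k0 hlp v
  have e2 : (fun v : ℝ => |v| * ‖𝓕 (fun t => k0 (t / l)) v‖) = fun v => (fun v => |v| * ‖𝓕 k0 v‖) (l * v) := by
    ext v
    rw [e]
    simp only [norm_mul, Complex.norm_real, Real.norm_eq_abs, abs_mul]
    ring
  rw [e2, e]
  refine ⟨(hi1.comp_mul_left' hlp.ne').const_mul _, ?_, hi2.comp_mul_left' hlp.ne', ?_⟩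
  · rw [integral_const_mul, Measure.integral_comp_mul_left (fun v => 𝓕 k0 v), hInteg0]
    rw [abs_of_pos (by positivity)]
    have : (l : ℂ) ≠ 0 := by exact_mod_cast hlp.ne'
    simp [this]
  · rw [Measure.integral_comp_mul_left (fun v => |v| * ‖𝓕 k0 v‖), ← hI, abs_of_pos (by positivity), smul_eq_mul, inv_mul_le_iff₀ hlp, hl]
    have : (I / ε + 1) * ε = I + ε := by field_simp
    linarith

lemma wi_fubini (ρ : ℝ → ℂ) (hm : Measurable ρ) (M : ℝ) (hM : ∀ u, ‖ρ u‖ ≤ M)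
    (G : ℂ → ℂ)
    (hGL : ∀ s : ℂ, 0 < s.re → G s = ∫ u in Set.Ioi (0 : ℝ), ρ u * Complex.exp (-s * u))
    (k : ℝ → ℂ) (hk : Continuous k) (hc : HasCompactSupport k) (x δ : ℝ) (hδ : 0 < δ) :
    ∫ u in Set.Ioi (0 : ℝ), (ρ u * Complex.exp (-δ * u)) * 𝓕 k (u - x) =
      ∫ t : ℝ, Complex.exp (2 * Real.pi * t * x * Complex.I) *
        (k t * G (δ + 2 * Real.pi * t * Complex.I)) := by
  have hG : ∀ t : ℝ, G (δ + 2 * Real.pi * t * Complex.I) =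
      ∫ u in Set.Ioi (0 : ℝ), ρ u * Complex.exp (-(δ + 2 * Real.pi * t * Complex.I) * u) :=
    fun t => hGL _ (by simpa using hδ)
  have hki : Integrable k := hk.integrable_of_hasCompactSupport hc
  have hr : Integrable (fun u : ℝ => ρ u * Complex.exp (-δ * u)) (volume.restrict (Set.Ioi 0)) := by
    have h1 : Integrable (fun u : ℝ => Complex.exp (-δ * u)) (volume.restrict (Set.Ioi 0)) := by
      have := (exp_neg_integrableOn_Ioi 0 hδ).ofReal (𝕜 := ℂ)
      simpa using this
    exact h1.bdd_mul hm.aestronglyMeasurable (Eventually.of_forall hM)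
  have hprod := hr.mul_prod hki
  have hI : Integrable (Function.uncurry fun (u : ℝ) (t : ℝ) => (ρ u * Complex.exp (-δ * u)) *
      (Complex.exp (((-2 * Real.pi * t * (u - x) : ℝ) : ℂ) * Complex.I) * k t))
      ((volume.restrict (Set.Ioi 0)).prod volume) := by
    have h2 := hprod.bdd_mul (c := 1)
      (f := fun z : ℝ × ℝ => Complex.exp (((-2 * Real.pi * z.2 * (z.1 - x) : ℝ) : ℂ) * Complex.I)) 
      (Continuous.aestronglyMeasurable (by fun_prop)) 
      (Eventually.of_forall fun z => by rw [Complex.norm_exp_ofReal_mul_I])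
    refine h2.congr (Eventually.of_forall fun z => ?_)
    simp only [Function.uncurry]
    ring
  calc _ = ∫ u in Set.Ioi (0 : ℝ), ∫ t : ℝ, (ρ u * Complex.exp (-δ * u)) *
      (Complex.exp (((-2 * Real.pi * t * (u - x) : ℝ) : ℂ) * Complex.I) * k t) := by
        congr 1
        ext u
        rw [integral_const_mul, Real.fourier_real_eq_integral_exp_smul]
        simp only [smul_eq_mul]
    _ = _ := by
        rw [integral_integral_swap hI]
        congr 1
        ext t
        rw [hG, ← integral_const_mul, ← integral_const_mul]
        congr 1
        ext u
        rw [show ∀ a b c d e : ℂ, a * b * (c * d) = (b * c) * a * d from fun a b c d e => by ring,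
          show ∀ a b c d : ℂ, a * (b * (c * d)) = (a * d) * c * b from fun a b c d => by ring,
          ← Complex.exp_add, ← Complex.exp_add]
        · congr 3
          push_cast
          ring
        · exact 0

lemma wi_kernel (ρ : ℝ → ℂ) (hm : Measurable ρ) (M : ℝ) (hM : ∀ u, ‖ρ u‖ ≤ M)
    (G : ℂ → ℂ) (hG : ContinuousOn G {s | 0 ≤ s.re})
    (hGL : ∀ s : ℂ, 0 < s.re → G s = ∫ u in Set.Ioi (0 : ℝ), ρ u * Complex.exp (-s * u))
    (k : ℝ → ℂ) (hk : Continuous k) (hc : HasCompactSupport k) (hi : Integrable (𝓕 k)) (x : ℝ) :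
    ∫ u in Set.Ioi (0 : ℝ), ρ u * 𝓕 k (u - x) =
      ∫ t : ℝ, Complex.exp (2 * Real.pi * t * x * Complex.I) *
        (k t * G (2 * Real.pi * t * Complex.I)) := by
  have hki : Integrable k := hk.integrable_of_hasCompactSupport hc
  let d : ℕ → ℝ := fun n => 1 / ((n : ℝ) + 1)
  have hd0 : ∀ n, 0 < d n := fun n => by positivity
  have hd1 : ∀ n, d n ≤ 1 := fun n => by
    simp only [d]
    rw [div_le_one (by positivity)]
    linarith [(Nat.cast_nonneg n : (0 : ℝ) ≤ n)]
  have hdt : Tendsto d atTop (nhds 0) := tendsto_one_div_add_atTop_nhds_zero_nat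
  have hdtc : Tendsto (fun n => (d n : ℂ)) atTop (nhds 0) := by
    exact_mod_cast (Complex.continuous_ofReal.tendsto 0).comp hdt
  have hL : Tendsto (fun n => ∫ u in Set.Ioi (0 : ℝ), (ρ u * Complex.exp (-(d n) * u)) * 𝓕 k (u - x))
      atTop (nhds (∫ u in Set.Ioi (0 : ℝ), ρ u * 𝓕 k (u - x))) := by
    have hix : Integrable (fun u => 𝓕 k (u - x)) := hi.comp_sub_right x
    refine tendsto_integral_of_dominated_convergence (fun u => M * ‖𝓕 k (u - x)‖) ?_ ?_ ?_ ?_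
    · intro n
      refine AEStronglyMeasurable.mul ?_ hix.aestronglyMeasurable.restrict
      exact (hm.mul (by fun_prop)).aestronglyMeasurable
    · exact (hix.norm.const_mul M).restrict
    · intro n
      filter_upwards [ae_restrict_mem measurableSet_Ioi] with u hu
      rw [norm_mul, norm_mul]
      have : ‖Complex.exp (-(d n) * u)‖ ≤ 1 := by
        rw [Complex.norm_exp]
        simp
        exact mul_nonneg (hd0 n).le (le_of_lt hu)
      have h3 := hM u
      have h4 : ‖ρ u‖ * ‖Complex.exp (-(d n) * u)‖ ≤ M := by
        calc _ ≤ ‖ρ u‖ * 1 := by gcongr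
          _ ≤ M := by simpa using h3
      gcongr
    · refine Eventually.of_forall fun u => ?_
      have : Tendsto (fun n => ρ u * Complex.exp (-(d n : ℂ) * u) * 𝓕 k (u - x)) atTop
          (nhds (ρ u * Complex.exp (-(0 : ℂ) * u) * 𝓕 k (u - x))) := by
        refine Tendsto.mul_const _ (Tendsto.const_mul _ ?_)
        exact (Complex.continuous_exp.tendsto _).comp ((hdtc.neg).mul_const _)
      simpa using this
  have hR : Tendsto (fun n => ∫ t : ℝ, Complex.exp (2 * Real.pi * t * x * Complex.I) *
        (k t * G (d n + 2 * Real.pi * t * Complex.I)))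
      atTop (nhds (∫ t : ℝ, Complex.exp (2 * Real.pi * t * x * Complex.I) *
        (k t * G (2 * Real.pi * t * Complex.I)))) := by
    have hcomp : IsCompact ((fun z : ℝ × ℝ => (z.1 : ℂ) + 2 * Real.pi * z.2 * Complex.I) ''
        (Set.Icc (0 : ℝ) 1 ×ˢ tsupport k)) :=
      (isCompact_Icc.prod hc).image (by fun_prop)
    obtain ⟨C, hC⟩ := hcomp.exists_bound_of_continuousOn (f := G) (hG.mono (by
      rintro _ ⟨⟨a, b⟩, ⟨ha, hb⟩, rfl⟩
      simpa using ha.1))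
    have hcont : ∀ δ : ℝ, 0 ≤ δ → Continuous fun t : ℝ => G (δ + 2 * Real.pi * t * Complex.I) := by
      intro δ hδ
      exact hG.comp_continuous (by fun_prop) (fun t => by simpa using hδ)
    refine tendsto_integral_of_dominated_convergence (fun t => ‖k t‖ * C) ?_ ?_ ?_ ?_
    · intro n
      have := hcont (d n) (hd0 n).le
      refine Continuous.aestronglyMeasurable (Continuous.mul (by fun_prop) (hk.mul this))
    · exact hki.norm.mul_const C
    · intro n
      refine Eventually.of_forall fun t => ?_
      rw [norm_mul, norm_mul]
      have : ‖Complex.exp (2 * Real.pi * t * x * Complex.I)‖ = 1 := by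
        have := Complex.norm_exp_ofReal_mul_I (2 * Real.pi * t * x)
        exact_mod_cast this
      rw [this, one_mul]
      by_cases ht : t ∈ tsupport k
      · gcongr
        exact hC _ ⟨(d n, t), ⟨⟨(hd0 n).le, hd1 n⟩, ht⟩, rfl⟩
      · rw [image_eq_zero_of_notMem_tsupport ht]; simp
    · refine Eventually.of_forall fun t => ?_
      refine Tendsto.const_mul _ (Tendsto.const_mul _ ?_)
      have h1 : ContinuousWithinAt G {s | 0 ≤ s.re} (2 * Real.pi * t * Complex.I) :=
        hG _ (by simp)
      refine Tendsto.comp h1 ?_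
      refine tendsto_nhdsWithin_iff.mpr ⟨?_, ?_⟩
      · have := hdtc.add_const (2 * Real.pi * t * Complex.I)
        simpa using this
      · refine Eventually.of_forall fun n => ?_
        simpa using (hd0 n).le
  refine tendsto_nhds_unique hL (hR.congr fun n => ?_)
  exact (wi_fubini ρ hm M hM G hGL k hk hc x (d n) (hd0 n)).symm

lemma wi_kernel_tendsto (ρ : ℝ → ℂ) (hm : Measurable ρ) (M : ℝ) (hM : ∀ u, ‖ρ u‖ ≤ M)
    (G : ℂ → ℂ) (hG : ContinuousOn G {s | 0 ≤ s.re})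
    (hGL : ∀ s : ℂ, 0 < s.re → G s = ∫ u in Set.Ioi (0 : ℝ), ρ u * Complex.exp (-s * u))
    (k : ℝ → ℂ) (hk : Continuous k) (hc : HasCompactSupport k) (hi : Integrable (𝓕 k)) :
    Tendsto (fun x : ℝ => ∫ u in Set.Ioi (0 : ℝ), ρ u * 𝓕 k (u - x)) atTop (nhds 0) := by
  have h := Real.zero_at_infty_fourier (fun t : ℝ => k t * G (2 * Real.pi * t * Complex.I))
  have h2 : Tendsto (fun x : ℝ => -x) atTop (cocompact ℝ) :=
    tendsto_neg_atTop_atBot.mono_right atBot_le_cocompact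
  refine (h.comp h2).congr fun x => ?_
  rw [wi_kernel ρ hm M hM G hG hGL k hk hc hi x, Function.comp,
    Real.fourier_real_eq_integral_exp_smul]
  congr 1
  ext t
  rw [smul_eq_mul]
  congr 2
  push_cast
  ring

lemma wi_average (ρ : ℝ → ℂ) (hm : Measurable ρ) (M : ℝ) (hM : ∀ u, ‖ρ u‖ ≤ M)
    (hneg : ∀ u ≤ 0, ρ u = 0)
    (G : ℂ → ℂ) (hG : ContinuousOn G {s | 0 ≤ s.re})
    (hGL : ∀ s : ℂ, 0 < s.re → G s = ∫ u in Set.Ioi (0 : ℝ), ρ u * Complex.exp (-s * u))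
    (h : ℝ) (hh : 0 < h) :
    Tendsto (fun x : ℝ => ∫ y in (0 : ℝ)..h, ρ (x + y)) atTop (nhds 0) := by
  have hM0 : 0 ≤ M := (norm_nonneg _).trans (hM 0)
  have hInteg : ∀ a b, IntervalIntegrable ρ volume a b := fun a b =>
    (intervalIntegrable_const (c := M)).mono_fun hm.aestronglyMeasurable
      (Eventually.of_forall fun u => by simpa using (hM u).trans (le_abs_self M))
  set R : ℝ → ℂ := fun x => ∫ y in (0 : ℝ)..h, ρ (x + y) with hR
  have hReq : ∀ x, R x = ∫ y in x..(x + h), ρ y := fun x => by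
    simp only [hR]
    rw [intervalIntegral.integral_comp_add_left]; simp
  have hlip : ∀ x v, ‖R x - R (x + v)‖ ≤ 2 * M * |v| := by
    intro x v
    rw [hReq, hReq, intervalIntegral.integral_interval_sub_interval_comm (hInteg _ _) (hInteg _ _) (hInteg _ _)]
    have h1 := intervalIntegral.norm_integral_le_of_norm_le_const (a := x) (b := x + v) (f := ρ) (C := M)
      fun u _ => hM u
    have h2 := intervalIntegral.norm_integral_le_of_norm_le_const (a := x + h) (b := x + v + h) (f := ρ)
      (C := M) fun u _ => hM u
    have e1 : x + v - x = v := by ring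
    have e2 : x + v + h - (x + h) = v := by ring
    rw [e1] at h1
    rw [e2] at h2
    calc _ ≤ _ := norm_sub_le _ _
      _ ≤ 2 * M * |v| := by linarith
  have hRb : ∀ x, ‖R x‖ ≤ M * h := fun x => by
    rw [hReq]
    have h1 := intervalIntegral.norm_integral_le_of_norm_le_const (a := x) (b := x + h) (f := ρ) (C := M)
      fun u _ => hM u
    simpa [abs_of_pos hh] using h1
  have hRc : Continuous R := by
    have : LipschitzWith (Real.toNNReal (2 * M)) R := by
      refine LipschitzWith.of_dist_le_mul fun x y => ?_
      rw [dist_eq_norm, dist_eq_norm, Real.coe_toNNReal _ (by positivity)]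
      have := hlip x (y - x)
      rw [add_sub_cancel] at this
      rwa [Real.norm_eq_abs, abs_sub_comm]
    exact this.continuous
  rw [Metric.tendsto_nhds]
  intro ε hε
  obtain ⟨k, hk, hc, hi, hi1, hv, hvε⟩ := exists_kernel (ε := ε / (4 * (M + 1))) (by positivity)
  have hT := wi_kernel_tendsto ρ hm M hM G hG hGL k hk hc hi
  have hS : ∀ x, ∫ u in Set.Ioi (0 : ℝ), ρ u * 𝓕 k (u - x) = ∫ v, ρ (v + x) * 𝓕 k v := by
    intro x
    rw [setIntegral_eq_integral_of_forall_compl_eq_zero (fun u hu => by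
      rw [hneg u (by simpa using hu), zero_mul]),
      ← integral_add_right_eq_self (fun u => ρ u * 𝓕 k (u - x)) x]
    simp
  simp only [hS] at hT
  rw [Metric.tendsto_nhds] at hT
  obtain ⟨X, hX⟩ := eventually_atTop.mp (hT (ε / (4 * h)) (by positivity))
  filter_upwards [eventually_ge_atTop X] with x hx
  have hF : ∫ y in (0 : ℝ)..h, ∫ v, ρ (v + (x + y)) * 𝓕 k v = ∫ v, R (x + v) * 𝓕 k v := by
    rw [intervalIntegral.integral_of_le hh.le, integral_integral_swap]
    · congr 1
      ext v
      rw [integral_mul_const]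
      simp only [hR]
      rw [intervalIntegral.integral_of_le hh.le]
      congr 2
      ext y
      congr 1
      ring
    · have h1 : Integrable (fun z : ℝ × ℝ => (1 : ℂ) * 𝓕 k z.2)
          ((volume.restrict (Set.Ioc 0 h)).prod volume) :=
        Integrable.mul_prod (integrable_const (1 : ℂ)) hi
      have h2 := h1.bdd_mul (c := M) (f := fun z : ℝ × ℝ => ρ (z.2 + (x + z.1)))
        (hm.comp (by fun_prop)).aestronglyMeasurable (Eventually.of_forall fun z => hM _)
      simpa [Function.uncurry_def] using h2
  have hb1 : ‖∫ v, R (x + v) * 𝓕 k v‖ ≤ ε / 4 := by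
    rw [← hF]
    have := intervalIntegral.norm_integral_le_of_norm_le_const (a := 0) (b := h)
      (f := fun y => ∫ v, ρ (v + (x + y)) * 𝓕 k v) (C := ε / (4 * h)) (fun y hy => by
        rw [Set.uIoc_of_le hh.le] at hy
        have := hX (x + y) (by linarith [hy.1])
        rw [dist_zero_right] at this
        exact this.le)
    rw [sub_zero, abs_of_pos hh] at this
    refine this.trans (le_of_eq ?_)
    field_simp
  have hiR : Integrable (fun v => R (x + v) * 𝓕 k v) :=
    hi.bdd_mul (c := M * h) (by fun_prop) (Eventually.of_forall fun v => hRb _)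
  have hb2 : ‖R x - ∫ v, R (x + v) * 𝓕 k v‖ ≤ ε / 2 := by
    have e : R x = ∫ v, R x * 𝓕 k v := by rw [integral_const_mul, hi1, mul_one]
    rw [e, ← integral_sub (hi.const_mul _) hiR]
    calc _ ≤ ∫ v, (2 * M) * (|v| * ‖𝓕 k v‖) := by
          refine norm_integral_le_of_norm_le (hv.const_mul _) (Eventually.of_forall fun v => ?_)
          rw [← sub_mul, norm_mul, ← mul_assoc]
          gcongr
          exact hlip x v
      _ ≤ 2 * M * (ε / (4 * (M + 1))) := by
          rw [integral_const_mul]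
          gcongr
      _ ≤ ε / 2 := by
          rw [mul_div_assoc', div_le_iff₀ (by positivity)]
          nlinarith
  rw [dist_zero_right]
  calc ‖R x‖ = ‖(R x - ∫ v, R (x + v) * 𝓕 k v) + ∫ v, R (x + v) * 𝓕 k v‖ := by
        rw [sub_add_cancel]
    _ ≤ _ := norm_add_le _ _
    _ < ε := by linarith

lemma wi_monotone (B : ℝ → ℝ) (c : ℝ) (hB : Measurable B) (M : ℝ) (hBM : ∀ u, |B u| ≤ M)
    (hmono : ∀ u v, 0 < u → u ≤ v → B u * Real.exp (-(v - u)) ≤ B v) (hnn : ∀ u, 0 ≤ B u)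
    (hav : ∀ h > 0, Tendsto (fun x : ℝ => ∫ y in (0 : ℝ)..h, (B (x + y) - c)) atTop (nhds 0)) :
    Tendsto B atTop (nhds c) := by
  have hInteg : ∀ x a b, IntervalIntegrable (fun y => B (x + y)) volume a b := fun x a b =>
    (intervalIntegrable_const (c := M)).mono_fun (hB.comp (by fun_prop)).aestronglyMeasurable
      (Eventually.of_forall fun u => by simpa using (hBM _).trans (le_abs_self M))
  have hsplit : ∀ x h, ∫ y in (0 : ℝ)..h, (B (x + y) - c) = (∫ y in (0 : ℝ)..h, B (x + y)) - h * c := by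
    intro x h
    rw [intervalIntegral.integral_sub (hInteg _ _ _) intervalIntegrable_const]
    simp
  have hup : ∀ h > 0, ∀ x > 0, B x ≤ Real.exp h * (c + (∫ y in (0 : ℝ)..h, (B (x + y) - c)) / h) := by
    intro h hh x hx
    have h1 : ∫ y in (0 : ℝ)..h, B x * Real.exp (-h) ≤ ∫ y in (0 : ℝ)..h, B (x + y) := by
      refine intervalIntegral.integral_mono_on hh.le intervalIntegrable_const (hInteg _ _ _) ?_
      intro y hy
      refine le_trans ?_ (hmono x (x + y) hx (by linarith [hy.1]))
      have := hnn x
      gcongr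
      linarith [hy.2]
    rw [hsplit]
    simp only [intervalIntegral.integral_const, sub_zero, smul_eq_mul] at h1
    have e : c + ((∫ y in (0 : ℝ)..h, B (x + y)) - h * c) / h = (∫ y in (0 : ℝ)..h, B (x + y)) / h := by
      field_simp; ring
    rw [e, mul_div_assoc', le_div_iff₀ hh]
    have := mul_le_mul_of_nonneg_left h1 (Real.exp_pos h).le
    have e2 : Real.exp h * (h * (B x * Real.exp (-h))) = B x * h := by
      rw [Real.exp_neg]; field_simp
    linarith
  have hlow : ∀ h > 0, ∀ x > 0, Real.exp (-h) * (c + (∫ y in (0 : ℝ)..h, (B (x + y) - c)) / h) ≤ B (x + h) := by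
    intro h hh x hx
    have h1 : ∫ y in (0 : ℝ)..h, B (x + y) ≤ ∫ y in (0 : ℝ)..h, B (x + h) * Real.exp h := by
      refine intervalIntegral.integral_mono_on hh.le (hInteg _ _ _) intervalIntegrable_const ?_
      intro y hy
      have h2 := hmono (x + y) (x + h) (by linarith [hy.1]) (by linarith [hy.2])
      have h3 : B (x + y) * Real.exp (-h) ≤ B (x + h) := by
        refine le_trans ?_ h2
        have := hnn (x + y)
        gcongr
        linarith [hy.1]
      have := mul_le_mul_of_nonneg_right h3 (Real.exp_pos h).le
      rwa [mul_assoc, ← Real.exp_add, neg_add_cancel, Real.exp_zero, mul_one] at this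
    rw [hsplit]
    simp only [intervalIntegral.integral_const, sub_zero, smul_eq_mul] at h1
    have e : c + ((∫ y in (0 : ℝ)..h, B (x + y)) - h * c) / h = (∫ y in (0 : ℝ)..h, B (x + y)) / h := by
      field_simp; ring
    rw [e, mul_div_assoc', div_le_iff₀ hh]
    have := mul_le_mul_of_nonneg_left h1 (Real.exp_pos (-h)).le
    have e2 : Real.exp (-h) * (h * (B (x + h) * Real.exp h)) = B (x + h) * h := by
      rw [Real.exp_neg]; field_simp
    linarith
  rw [tendsto_order]
  have hlim : ∀ h > 0, ∀ e : ℝ, Tendsto (fun x => e * (c + (∫ y in (0 : ℝ)..h, (B (x + y) - c)) / h)) atTop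
      (nhds (e * c)) := by
    intro h hh e
    have := ((hav h hh).div_const h).const_add c |>.const_mul e
    simpa using this
  constructor
  · intro a ha
    have h0 : Tendsto (fun h : ℝ => Real.exp (-h) * c) (nhdsWithin 0 (Set.Ioi 0)) (nhds (Real.exp (-0) * c)) :=
      (Continuous.tendsto (by fun_prop) 0).mono_left nhdsWithin_le_nhds
    simp only [neg_zero, Real.exp_zero, one_mul] at h0
    obtain ⟨h, hha, hh⟩ := ((h0.eventually_const_lt ha).and self_mem_nhdsWithin).exists
    have h3 := (hlim h hh _).eventually_const_lt hha
    have h4 : ∀ᶠ x in atTop, a < B (x + h) := by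
      filter_upwards [h3, eventually_gt_atTop 0] with x h5 h6
      exact h5.trans_le (hlow h hh x h6)
    have h5 := (tendsto_atTop_add_const_right atTop (-h) tendsto_id).eventually h4
    simpa using h5
  · intro a ha
    have h0 : Tendsto (fun h : ℝ => Real.exp h * c) (nhdsWithin 0 (Set.Ioi 0)) (nhds (Real.exp 0 * c)) :=
      (Continuous.tendsto (by fun_prop) 0).mono_left nhdsWithin_le_nhds
    simp only [Real.exp_zero, one_mul] at h0
    obtain ⟨h, hha, hh⟩ := ((h0.eventually_lt_const ha).and self_mem_nhdsWithin).exists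
    have h3 := (hlim h hh _).eventually_lt_const hha
    filter_upwards [h3, eventually_gt_atTop 0] with x h5 h6
    exact (hup h hh x h6).trans_lt h5

theorem wiener_ikehara (f : ℕ → ℝ) (hf : ∀ n, 0 ≤ f n) (C : ℝ)
    (hC : ∀ n : ℕ, ∑ j ∈ Finset.Icc 1 n, f j ≤ C * n) (c : ℝ) (H : ℂ → ℂ)
    (hH : ContinuousOn H {s | 1 ≤ s.re})
    (hHL : ∀ s : ℂ, 1 < s.re → H s = LSeries (fun n => (f n : ℂ)) s - c / (s - 1)) :
    Tendsto (fun n : ℕ => (∑ j ∈ Finset.Icc 1 n, f j) / n) atTop (nhds c) := by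
  have hC0 : 0 ≤ C := by
    have := hC 1
    simp at this
    exact (hf 1).trans this
  set A : ℝ → ℝ := fun t => ∑ j ∈ Finset.Icc 1 ⌊t⌋₊, f j with hA
  have hAm : Monotone A := fun x y hxy =>
    Finset.sum_le_sum_of_subset_of_nonneg
      (Finset.Icc_subset_Icc le_rfl (Nat.floor_le_floor hxy)) fun i _ _ => hf i
  have hA0 : ∀ t, 0 ≤ A t := fun t => Finset.sum_nonneg fun i _ => hf i
  have hAC : ∀ t, 0 ≤ t → A t ≤ C * t := fun t ht => by
    refine (hC ⌊t⌋₊).trans ?_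
    gcongr
    exact Nat.floor_le ht
  set B : ℝ → ℝ := fun u => A (Real.exp u) * Real.exp (-u) with hB
  have hBm : Measurable B := (hAm.measurable.comp Real.measurable_exp).mul (by fun_prop)
  have hB0 : ∀ u, 0 ≤ B u := fun u => mul_nonneg (hA0 _) (Real.exp_pos _).le
  have hBC : ∀ u, B u ≤ C := fun u => by
    have := hAC (Real.exp u) (Real.exp_pos u).le
    calc B u ≤ C * Real.exp u * Real.exp (-u) := by simp only [hB]; gcongr
      _ = C := by rw [mul_assoc, ← Real.exp_add]; simp
  set ρ : ℝ → ℂ := fun u => if 0 < u then ((B u - c : ℝ) : ℂ) else 0 with hρ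
  have hρm : Measurable ρ :=
    Measurable.ite measurableSet_Ioi (Complex.measurable_ofReal.comp (hBm.sub_const c)) measurable_const
  have hρM : ∀ u, ‖ρ u‖ ≤ C + |c| := fun u => by
    simp only [hρ]
    split_ifs
    · rw [Complex.norm_real, Real.norm_eq_abs]
      refine (abs_sub _ _).trans ?_
      rw [abs_of_nonneg (hB0 u)]
      linarith [hBC u]
    · simp; positivity
  have hlap : ∀ s : ℂ, 0 < s.re → (H (1 + s) - c) / (1 + s) =
      ∫ u in Set.Ioi (0 : ℝ), ρ u * Complex.exp (-s * u) := by
    intro s hs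
    have hs0 : s ≠ 0 := fun h => by simp [h] at hs
    have hs1 : 1 + s ≠ 0 := fun h => by
      have := congrArg Complex.re h
      simp at this
      linarith
    have hL : LSeries (fun n => (f n : ℂ)) (1 + s) = (1 + s) *
        ∫ u in Set.Ioi (0 : ℝ), (B u : ℂ) * Complex.exp (-s * u) := by
      rw [LSeries_eq_mul_integral_of_nonneg f (r := 1) zero_le_one (by simpa using hs) ?_ hf]
      · congr 1
        have himg : Real.exp '' Set.Ioi 0 = Set.Ioi 1 := by
          ext y
          constructor
          · rintro ⟨x, hx, rfl⟩
            exact Real.one_lt_exp_iff.mpr hx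
          · intro hy
            have hy' : (1 : ℝ) < y := hy
            exact ⟨Real.log y, Real.log_pos hy', Real.exp_log (by linarith)⟩
        rw [← himg, integral_image_eq_integral_abs_deriv_smul measurableSet_Ioi
          (fun x _ => (Real.hasDerivAt_exp x).hasDerivWithinAt) Real.exp_injective.injOn]
        congr 1
        ext u
        rw [abs_of_pos (Real.exp_pos u), Complex.real_smul, Complex.cpow_def_of_ne_zero
          (by exact_mod_cast (Real.exp_pos u).ne'), ← Complex.ofReal_log (Real.exp_pos u).le, Real.log_exp]
        simp only [hB, hA]
        push_cast
        rw [show ∀ a b d : ℂ, a * (b * d) = b * (a * d) from fun a b d => by ring, ← Complex.exp_add,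
          mul_assoc, ← Complex.exp_add]
        congr 2
        ring
      · refine Asymptotics.IsBigO.of_bound C (Eventually.of_forall fun n => ?_)
        rw [Real.norm_of_nonneg (Finset.sum_nonneg fun i _ => hf i)]
        simpa using hC n
    have hexp : Integrable (fun u : ℝ => Complex.exp (-s * u)) (volume.restrict (Set.Ioi 0)) :=
      integrableOn_exp_mul_complex_Ioi (a := -s) (by simpa using hs) 0
    have hBi : Integrable (fun u : ℝ => (B u : ℂ) * Complex.exp (-s * u)) (volume.restrict (Set.Ioi 0)) :=
      hexp.bdd_mul (c := C) (Complex.measurable_ofReal.comp hBm).aestronglyMeasurable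
        (Eventually.of_forall fun u => by
          rw [Complex.norm_real, Real.norm_of_nonneg (hB0 u)]; exact hBC u)
    have e1 : ∫ u in Set.Ioi (0 : ℝ), ρ u * Complex.exp (-s * u) =
        ∫ u in Set.Ioi (0 : ℝ), ((B u : ℂ) * Complex.exp (-s * u) - c * Complex.exp (-s * u)) := by
      refine setIntegral_congr_fun measurableSet_Ioi fun u hu => ?_
      have hu' : 0 < u := hu
      simp only [hρ, hu', if_true]
      push_cast
      ring
    rw [e1, integral_sub hBi (hexp.const_mul _), integral_const_mul,
      integral_exp_mul_complex_Ioi (a := -s) (by simpa using hs) 0, hHL _ (by simpa using hs), hL]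
    simp
    field_simp
    ring
  have hav : ∀ h > 0, Tendsto (fun x : ℝ => ∫ y in (0 : ℝ)..h, (B (x + y) - c)) atTop (nhds 0) := by
    intro h hh
    have := wi_average ρ hρm (C + |c|) hρM (fun u hu => by simp [hρ, hu.not_gt])
      (fun s => (H (1 + s) - c) / (1 + s)) (by
        refine ContinuousOn.div ((hH.comp (by fun_prop) fun s hs => by simpa using hs).sub
          continuousOn_const) (by fun_prop) fun s hs h => ?_
        have := congrArg Complex.re h
        simp at this hs
        linarith) hlap h hh
    have h2 := (Complex.continuous_re.tendsto 0).comp this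
    simp only [Complex.zero_re] at h2
    refine h2.congr' ?_
    filter_upwards [eventually_gt_atTop 0] with x hx
    have e : ∫ y in (0 : ℝ)..h, ρ (x + y) = ∫ y in (0 : ℝ)..h, ((B (x + y) - c : ℝ) : ℂ) := by
      refine intervalIntegral.integral_congr fun y hy => ?_
      rw [Set.uIcc_of_le (le_of_lt hh)] at hy
      have : 0 < x + y := by linarith [hy.1]
      simp only [hρ, this, if_true]
    rw [Function.comp, e, intervalIntegral.integral_ofReal, Complex.ofReal_re]
  have hlim := wi_monotone B c hBm C (fun u => by rw [abs_of_nonneg (hB0 u)]; exact hBC u) ?_ hB0 hav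
  · have h2 : Tendsto (fun n : ℕ => Real.log n) atTop atTop :=
      Real.tendsto_log_atTop.comp tendsto_natCast_atTop_atTop
    refine (hlim.comp h2).congr' ?_
    filter_upwards [eventually_gt_atTop 0] with n hn
    have hn' : (0 : ℝ) < n := by exact_mod_cast hn
    simp only [Function.comp, hB, hA]
    rw [Real.exp_neg, Real.exp_log hn', Nat.floor_natCast, div_eq_mul_inv]
  · intro u v _ huv
    simp only [hB]
    rw [mul_assoc, ← Real.exp_add, show -u + -(v - u) = -v by ring]
    gcongr
    exact hAm (Real.exp_le_exp.mpr huv)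

lemma sum_residueClass_tendsto (m : ℕ) [NeZero m] :
    Tendsto (fun n : ℕ => (∑ j ∈ Finset.Icc 1 n,
      ArithmeticFunction.vonMangoldt.residueClass (1 : ZMod m) j) / n) atTop
      (nhds ((m.totient : ℝ)⁻¹)) := by
  refine wiener_ikehara _ (ArithmeticFunction.vonMangoldt.residueClass_nonneg _) (Real.log 4 + 4) ?_ _
    (ArithmeticFunction.vonMangoldt.LFunctionResidueClassAux (1 : ZMod m))
    (ArithmeticFunction.vonMangoldt.continuousOn_LFunctionResidueClassAux _) ?_
  · intro n
    refine le_trans ?_ (Chebyshev.psi_le_const_mul_self (Nat.cast_nonneg n))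
    rw [Chebyshev.psi, Nat.floor_natCast]
    exact Finset.sum_le_sum fun i _ => ArithmeticFunction.vonMangoldt.residueClass_le _ i
  · intro s hs
    have := ArithmeticFunction.vonMangoldt.eqOn_LFunctionResidueClassAux (a := (1 : ZMod m)) isUnit_one hs
    rw [this]
    simp

/-- `log n` on the primes `n` congruent to `1` modulo `m`, zero elsewhere. -/
noncomputable def apLog (m n : ℕ) : ℝ := if n.Prime ∧ m ∣ n - 1 then Real.log n else 0

lemma apLog_nonneg (m n : ℕ) : 0 ≤ apLog m n := by
  unfold apLog
  split_ifs with h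
  · exact Real.log_natCast_nonneg n
  · exact le_rfl

lemma natCast_eq_one_iff_dvd (m n : ℕ) (hn : 1 ≤ n) : (n : ZMod m) = 1 ↔ m ∣ n - 1 := by
  rw [← Nat.modEq_iff_dvd' hn, ← ZMod.natCast_eq_natCast_iff]
  simp [eq_comm]

lemma sum_apLog_tendsto (m : ℕ) (hm : m ≠ 0) :
    Tendsto (fun n : ℕ => (∑ j ∈ Finset.Icc 1 n, apLog m j) / n) atTop
      (nhds ((m.totient : ℝ)⁻¹)) := by
  haveI : NeZero m := ⟨hm⟩
  have h := sum_residueClass_tendsto m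
  obtain ⟨C, hC⟩ := Chebyshev.psi_sub_theta_le_mul_sqrt
  have hd : ∀ n : ℕ, |∑ j ∈ Finset.Icc 1 n, ArithmeticFunction.vonMangoldt.residueClass (1 : ZMod m) j -
      ∑ j ∈ Finset.Icc 1 n, apLog m j| ≤ C * Real.sqrt n := by
    intro n
    refine le_trans ?_ (hC n)
    rw [Chebyshev.psi_sub_theta_eq_sum_not_prime, Nat.floor_natCast, Finset.sum_filter,
      ← Finset.sum_sub_distrib]
    refine (Finset.abs_sum_le_sum_abs _ _).trans (Finset.sum_le_sum fun j hj => ?_)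
    have hj1 : 1 ≤ j := (Finset.mem_Icc.mp hj).1
    simp only [apLog, ArithmeticFunction.vonMangoldt.residueClass, Set.indicator_apply,
      Set.mem_ofPred_eq, natCast_eq_one_iff_dvd m j hj1]
    by_cases hp : j.Prime
    · simp only [hp, true_and, not_true, if_false]
      split_ifs
      · simp [ArithmeticFunction.vonMangoldt_apply_prime hp]
      · simp
    · simp only [hp, false_and, if_false, not_false_iff, if_true, sub_zero]
      split_ifs
      · exact (abs_of_nonneg ArithmeticFunction.vonMangoldt_nonneg).le
      · simp
  have hz : Tendsto (fun n : ℕ => C * Real.sqrt n / n) atTop (nhds 0) := by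
    have h1 : Tendsto (fun n : ℕ => C * (Real.sqrt n)⁻¹) atTop (nhds (C * 0)) :=
      ((tendsto_inv_atTop_zero.comp (Real.tendsto_sqrt_atTop.comp tendsto_natCast_atTop_atTop)).const_mul C)
    rw [mul_zero] at h1
    refine h1.congr fun n => ?_
    rw [mul_div_assoc, Real.sqrt_div_self', one_div]
  have hz2 : Tendsto (fun n : ℕ => (∑ j ∈ Finset.Icc 1 n, ArithmeticFunction.vonMangoldt.residueClass (1 : ZMod m) j) / n -
      (∑ j ∈ Finset.Icc 1 n, apLog m j) / n) atTop (nhds 0) := by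
    refine squeeze_zero_norm (fun n => ?_) hz
    rw [← sub_div, norm_div, Real.norm_eq_abs, Real.norm_natCast]
    gcongr
    exact hd n
  have := h.sub hz2
  simpa using this

/-- The weight `n^k (n-1)^r`. -/
noncomputable def wt (k r n : ℕ) : ℝ := (n : ℝ) ^ k * ((n : ℝ) - 1) ^ r

/-- The weight divided by the logarithm. -/
noncomputable def wlog (k r n : ℕ) : ℝ := wt k r n / Real.log n

lemma wt_nonneg (k r n : ℕ) (hn : 1 ≤ n) : 0 ≤ wt k r n := by
  have : (1 : ℝ) ≤ n := by exact_mod_cast hn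
  have : (0 : ℝ) ≤ (n : ℝ) - 1 := by linarith
  unfold wt
  positivity

lemma wt_pos (k r n : ℕ) (hn : 2 ≤ n) : 0 < wt k r n := by
  have : (2 : ℝ) ≤ n := by exact_mod_cast hn
  have : (0 : ℝ) < (n : ℝ) - 1 := by linarith
  unfold wt
  positivity

lemma wt_mono (k r a b : ℕ) (ha : 1 ≤ a) (hab : a ≤ b) : wt k r a ≤ wt k r b := by
  have h1 : (1 : ℝ) ≤ a := by exact_mod_cast ha
  have h2 : (a : ℝ) ≤ b := by exact_mod_cast hab
  have : (0 : ℝ) ≤ (a : ℝ) - 1 := by linarith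
  unfold wt
  gcongr

lemma wlog_nonneg (k r n : ℕ) : 0 ≤ wlog k r n := by
  unfold wlog
  rcases Nat.eq_zero_or_pos n with h | h
  · simp [h]
  · exact div_nonneg (wt_nonneg k r n h) (Real.log_natCast_nonneg n)

lemma wlog_pos (k r n : ℕ) (hn : 2 ≤ n) : 0 < wlog k r n :=
  div_pos (wt_pos k r n hn) (Real.log_pos (by exact_mod_cast hn))

lemma wlog_mono (k r : ℕ) (hr : 1 ≤ r) : Monotone (wlog k r) := by
  refine monotone_nat_of_le_succ fun n => ?_
  rcases Nat.lt_or_ge n 2 with h | h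
  · have : wlog k r n = 0 := by
      unfold wlog
      interval_cases n <;> simp
    rw [this]
    exact wlog_nonneg _ _ _
  obtain ⟨s, rfl⟩ : ∃ s, r = s + 1 := ⟨r - 1, by omega⟩
  have hn : (2 : ℝ) ≤ n := by exact_mod_cast h
  have hl : 0 < Real.log n := Real.log_pos (by linarith)
  have hl' : 0 < Real.log ((n : ℝ) + 1) := Real.log_pos (by linarith)
  have key : ((n : ℝ) - 1) / Real.log n ≤ n / Real.log (n + 1) := by
    rw [div_le_div_iff₀ hl hl']
    have h1 : Real.log (n + 1) ≤ Real.log n + 1 / n := by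
      have e : (n : ℝ) + 1 = n * (1 + 1 / n) := by field_simp
      rw [e, Real.log_mul (by positivity) (by positivity)]
      have := Real.log_le_sub_one_of_pos (x := 1 + 1 / (n : ℝ)) (by positivity)
      linarith
    have h2 := Real.one_sub_inv_le_log_of_pos (x := (n : ℝ)) (by linarith)
    have h3 : ((n : ℝ) - 1) * (1 / n) = 1 - (n : ℝ)⁻¹ := by field_simp
    have h4 := mul_le_mul_of_nonneg_left h1 (by linarith : (0 : ℝ) ≤ (n : ℝ) - 1)
    nlinarith
  have e1 : wlog k (s + 1) n = (n : ℝ) ^ k * ((n : ℝ) - 1) ^ s * (((n : ℝ) - 1) / Real.log n) := by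
    unfold wlog wt; ring
  have e2 : wlog k (s + 1) (n + 1) = ((n : ℝ) + 1) ^ k * (n : ℝ) ^ s * (n / Real.log (n + 1)) := by
    unfold wlog wt; push_cast; rw [add_sub_cancel_right]; ring
  rw [e1, e2]
  have h0 : (0 : ℝ) ≤ (n : ℝ) - 1 := by linarith
  have h5 : (n : ℝ) - 1 ≤ n := by linarith
  have h6 : (n : ℝ) ≤ n + 1 := by linarith
  gcongr

lemma abel_identity (e g : ℕ → ℝ) (N : ℕ) :
    ∑ j ∈ Finset.Icc 1 N, e j * g j = (∑ j ∈ Finset.Icc 1 N, e j) * g N -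
      ∑ i ∈ Finset.range N, (∑ j ∈ Finset.Icc 1 i, e j) * (g (i + 1) - g i) := by
  induction N with
  | zero => simp
  | succ N ih =>
    rw [Finset.sum_Icc_succ_top (by omega), Finset.sum_Icc_succ_top (by omega), Finset.sum_range_succ, ih]
    ring

lemma abel_littleO (e g : ℕ → ℝ) (hg : Monotone g) (hg0 : ∀ n, 0 ≤ g n)
    (he : Tendsto (fun n : ℕ => (∑ j ∈ Finset.Icc 1 n, e j) / n) atTop (nhds 0)) {ε : ℝ} (hε : 0 < ε) :
    ∀ᶠ N : ℕ in atTop, |∑ j ∈ Finset.Icc 1 N, e j * g j| ≤ ε * (N * g N) := by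
  set E : ℕ → ℝ := fun n => ∑ j ∈ Finset.Icc 1 n, e j with hE
  rw [Metric.tendsto_nhds] at he
  obtain ⟨N0, hN0⟩ := eventually_atTop.mp (he (ε / 4) (by positivity))
  set K := ∑ i ∈ Finset.range (N0 + 1), |E i| with hK
  have hK0 : 0 ≤ K := Finset.sum_nonneg fun i _ => abs_nonneg _
  have hb : ∀ n, |E n| ≤ K + ε / 4 * n := by
    intro n
    rcases Nat.lt_or_ge n (N0 + 1) with h | h
    · have := Finset.single_le_sum (f := fun i => |E i|) (fun i _ => abs_nonneg _) (Finset.mem_range.mpr h)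
      have h2 : 0 ≤ ε / 4 * (n : ℝ) := by positivity
      linarith
    · have h1 := hN0 n (by omega)
      have hn : (0 : ℝ) < n := by exact_mod_cast (by omega : 0 < n)
      rw [dist_zero_right, norm_div, Real.norm_natCast, Real.norm_eq_abs, div_lt_iff₀ hn] at h1
      linarith
  obtain ⟨N1, hN1⟩ := exists_nat_gt (4 * K / ε)
  filter_upwards [eventually_ge_atTop N1] with N hN
  have hKN : K ≤ ε / 4 * N := by
    have : (N1 : ℝ) ≤ N := by exact_mod_cast hN
    rw [div_lt_iff₀ hε] at hN1
    nlinarith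
  have hb' : ∀ n ≤ N, |E n| ≤ ε / 2 * N := fun n hn => by
    have h1 : (n : ℝ) ≤ N := by exact_mod_cast hn
    have h2 := hb n
    nlinarith
  rw [abel_identity]
  have h2 : |∑ i ∈ Finset.range N, E i * (g (i + 1) - g i)| ≤ ε / 2 * N * g N := by
    calc _ ≤ ∑ i ∈ Finset.range N, ε / 2 * N * (g (i + 1) - g i) := by
          refine (Finset.abs_sum_le_sum_abs _ _).trans (Finset.sum_le_sum fun i hi => ?_)
          have h3 : 0 ≤ g (i + 1) - g i := sub_nonneg.mpr (hg (Nat.le_succ i))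
          rw [abs_mul, abs_of_nonneg h3]
          gcongr
          exact hb' i (Finset.mem_range.mp hi).le
      _ = ε / 2 * N * (g N - g 0) := by rw [← Finset.mul_sum, Finset.sum_range_sub]
      _ ≤ ε / 2 * N * g N := by
          gcongr
          linarith [hg0 0]
  have h3 : |E N * g N| ≤ ε / 2 * N * g N := by
    rw [abs_mul, abs_of_nonneg (hg0 N)]
    gcongr
    · exact hg0 N
    · exact hb' N le_rfl
  calc _ ≤ |E N * g N| + |∑ i ∈ Finset.range N, E i * (g (i + 1) - g i)| := abs_sub _ _
    _ ≤ _ := by linarith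

/-- Sum of the weights over primes `≤ x` congruent to `1` mod `m`. -/
noncomputable def apSum (k r m x : ℕ) : ℝ :=
  ∑ p ∈ (Nat.primesLE x) with m ∣ p - 1, wt k r p

lemma apSum_eq (k r m x : ℕ) : apSum k r m x = ∑ j ∈ Finset.Icc 1 x, apLog m j * wlog k r j := by
  rw [apSum, Nat.primesLE_eq_filter_Icc_one, Finset.filter_filter, Finset.sum_filter]
  refine Finset.sum_congr rfl fun j _ => ?_
  unfold apLog wlog
  split_ifs with h
  · have : Real.log j ≠ 0 := (Real.log_pos (by exact_mod_cast h.1.one_lt)).ne'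
    field_simp
  · simp

lemma apSum_one_lower (k r : ℕ) (hr : 1 ≤ r) : ∃ c > 0, ∀ᶠ x : ℕ in atTop,
    c * (x * wlog k r x) ≤ apSum k r 1 x := by
  have ht := sum_apLog_tendsto 1 one_ne_zero
  simp only [Nat.totient_one, Nat.cast_one, inv_one] at ht
  have hlow := ht.eventually_const_lt (by norm_num : (0.9 : ℝ) < 1)
  have hhigh := ht.eventually_lt_const (by norm_num : (1 : ℝ) < 1.1)
  have hhalf : Tendsto (fun x : ℕ => x / 2) atTop atTop := Nat.tendsto_div_const_atTop (by norm_num)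
  refine ⟨(1 / 4) * ((1 / 4) ^ k * (1 / 4) ^ r), by positivity, ?_⟩
  filter_upwards [hlow, hhalf.eventually hhigh, eventually_ge_atTop 16] with x h1 h2 hx
  set y := x / 2 with hy
  have hxy : x ≤ 2 * y + 1 := by omega
  have hyx : 2 * y ≤ x := by omega
  have hxR : (16 : ℝ) ≤ x := by exact_mod_cast hx
  have hxyR : (x : ℝ) ≤ 2 * y + 1 := by exact_mod_cast hxy
  have hyxR : 2 * (y : ℝ) ≤ x := by exact_mod_cast hyx
  have hy0 : (0 : ℝ) < y := by linarith
  rw [lt_div_iff₀ (by linarith)] at h1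
  rw [div_lt_iff₀ hy0] at h2
  have hsplit : ∀ f : ℕ → ℝ, ∑ j ∈ Finset.Icc 1 x, f j =
      ∑ j ∈ Finset.Icc 1 y, f j + ∑ j ∈ Finset.Ioc y x, f j := by
    intro f
    rw [← Finset.sum_union]
    · congr 1
      ext j
      simp only [Finset.mem_Icc, Finset.mem_union, Finset.mem_Ioc]
      omega
    · rw [Finset.disjoint_left]
      intro j hj
      simp only [Finset.mem_Icc, Finset.mem_Ioc] at hj ⊢
      omega
  have h3 : (1 / 4 : ℝ) * x ≤ ∑ j ∈ Finset.Ioc y x, apLog 1 j := by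
    rw [hsplit] at h1
    linarith
  have h4 : (1 / 4) ^ k * (1 / 4) ^ r * wlog k r x ≤ wlog k r y := by
    unfold wlog wt
    have hl : 0 < Real.log y := Real.log_pos (by linarith)
    have hll : Real.log y ≤ Real.log x := Real.log_le_log hy0 (by linarith)
    have e : (1 / 4 : ℝ) ^ k * (1 / 4) ^ r * ((x : ℝ) ^ k * ((x : ℝ) - 1) ^ r / Real.log x) =
        (((1 / 4) * x) ^ k * ((1 / 4) * ((x : ℝ) - 1)) ^ r) / Real.log x := by
      rw [mul_pow, mul_pow]; ring
    rw [e]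
    have a1 : (1 / 4 : ℝ) * x ≤ y := by linarith
    have a2 : (1 / 4 : ℝ) * (x - 1) ≤ y - 1 := by linarith
    have a3 : (0 : ℝ) ≤ 1 / 4 * (x - 1) := by linarith
    have a4 : (0 : ℝ) ≤ y - 1 := by linarith
    gcongr
  have hw := wlog_nonneg k r y
  rw [apSum_eq, hsplit]
  calc (1 / 4) * ((1 / 4) ^ k * (1 / 4) ^ r) * (x * wlog k r x)
      = (1 / 4 * x) * ((1 / 4) ^ k * (1 / 4) ^ r * wlog k r x) := by ring
    _ ≤ (∑ j ∈ Finset.Ioc y x, apLog 1 j) * wlog k r y := by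
        have := wlog_nonneg k r x
        gcongr
        exact Finset.sum_nonneg fun j _ => apLog_nonneg 1 j
    _ ≤ ∑ j ∈ Finset.Ioc y x, apLog 1 j * wlog k r j := by
        rw [Finset.sum_mul]
        refine Finset.sum_le_sum fun j hj => ?_
        exact mul_le_mul_of_nonneg_left (wlog_mono k r hr (Finset.mem_Ioc.mp hj).1.le) (apLog_nonneg 1 j)
    _ ≤ _ := by
        have : 0 ≤ ∑ j ∈ Finset.Icc 1 y, apLog 1 j * wlog k r j :=
          Finset.sum_nonneg fun j _ => mul_nonneg (apLog_nonneg 1 j) (wlog_nonneg k r j)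
        linarith

lemma apSum_ratio (k r m : ℕ) (hr : 1 ≤ r) (hm : m ≠ 0) :
    Tendsto (fun x : ℕ => apSum k r m x / apSum k r 1 x) atTop (nhds ((m.totient : ℝ)⁻¹)) := by
  obtain ⟨c, hc, hlow⟩ := apSum_one_lower k r hr
  have h1 := sum_apLog_tendsto m hm
  have h2 := (sum_apLog_tendsto 1 one_ne_zero).const_mul ((m.totient : ℝ)⁻¹)
  simp only [Nat.totient_one, Nat.cast_one, inv_one, mul_one] at h2
  have h3 := h1.sub h2
  rw [sub_self] at h3
  have h4 : Tendsto (fun n : ℕ => (∑ j ∈ Finset.Icc 1 n, (apLog m j - (m.totient : ℝ)⁻¹ * apLog 1 j)) / n)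
      atTop (nhds 0) := by
    refine h3.congr fun n => ?_
    rw [Finset.sum_sub_distrib, ← Finset.mul_sum, sub_div, mul_div_assoc]
  rw [Metric.tendsto_nhds]
  intro ε hε
  have h5 := abel_littleO _ _ (wlog_mono k r hr) (wlog_nonneg k r) h4 (ε := ε / 2 * c) (by positivity)
  filter_upwards [h5, hlow, eventually_ge_atTop 2] with x h5 h6 hx
  have hD : 0 < apSum k r 1 x := by
    refine lt_of_lt_of_le ?_ h6
    have := wlog_pos k r x hx
    have : (0 : ℝ) < x := by exact_mod_cast (by omega : 0 < x)
    positivity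
  have e : ∑ j ∈ Finset.Icc 1 x, (apLog m j - (m.totient : ℝ)⁻¹ * apLog 1 j) * wlog k r j =
      apSum k r m x - (m.totient : ℝ)⁻¹ * apSum k r 1 x := by
    rw [apSum_eq, apSum_eq, Finset.mul_sum, ← Finset.sum_sub_distrib]
    exact Finset.sum_congr rfl fun j _ => by ring
  rw [e] at h5
  have e2 : apSum k r m x / apSum k r 1 x - (m.totient : ℝ)⁻¹ =
      (apSum k r m x - (m.totient : ℝ)⁻¹ * apSum k r 1 x) / apSum k r 1 x := by
    field_simp
  rw [Real.dist_eq, e2, abs_div, abs_of_pos hD, div_lt_iff₀ hD]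
  calc _ ≤ _ := h5
    _ = ε / 2 * (c * (x * wlog k r x)) := by ring
    _ ≤ ε / 2 * apSum k r 1 x := by gcongr
    _ < ε * apSum k r 1 x := by nlinarith

lemma prod_progression_le (q n : ℕ) (hq : 1 ≤ q) :
    ∏ j ∈ Finset.range n, (q * j + 1) ≤ q ^ n * n.factorial := by
  induction n with
  | zero => simp
  | succ n ih =>
    rw [Finset.prod_range_succ, Nat.factorial_succ, pow_succ]
    calc _ ≤ (q ^ n * n.factorial) * (q * (n + 1)) := by
          gcongr
          nlinarith
      _ = _ := by ring

lemma dvd_prod_progression (q n m : ℕ) (hm : m ∣ n.factorial) (hc : Nat.Coprime q m) :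
    m ∣ ∏ j ∈ Finset.range n, (q * j + 1) := by
  rcases Nat.eq_zero_or_pos m with h0 | h0
  · exact absurd (Nat.eq_zero_of_zero_dvd (h0 ▸ hm)) (Nat.factorial_ne_zero n)
  obtain ⟨a, ha⟩ : ∃ a : ℕ, (q * a : ZMod m) = 1 := by
    haveI : NeZero m := ⟨h0.ne'⟩
    refine ⟨((q : ZMod m)⁻¹).val, ?_⟩
    rw [ZMod.natCast_zmod_val]
    exact ZMod.coe_mul_inv_eq_one q hc
  rw [← ZMod.natCast_eq_zero_iff]
  have e : ((∏ j ∈ Finset.range n, (q * j + 1) : ℕ) : ZMod m) = (q : ZMod m) ^ n * (a.ascFactorial n : ℕ) := by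
    rw [Nat.ascFactorial_eq_prod_range]
    push_cast
    have e0 : (q : ZMod m) ^ n = ∏ _j ∈ Finset.range n, (q : ZMod m) := by simp
    rw [e0, ← Finset.prod_mul_distrib]
    refine Finset.prod_congr rfl fun j _ => ?_
    rw [mul_add, ha]
    ring
  rw [e, (ZMod.natCast_eq_zero_iff _ _).mpr (hm.trans (Nat.factorial_dvd_ascFactorial a n)), mul_zero]

lemma prod_primes_progression_le (q n : ℕ) (hq : q.Prime) :
    ∏ p ∈ (Finset.Ioc n (q * n)) with p.Prime ∧ q ∣ p - 1, p ≤ q ^ (2 * n) := by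
  set S := (Finset.Ioc n (q * n)).filter fun p => p.Prime ∧ q ∣ p - 1 with hS
  have hmem : ∀ p ∈ S, n < p ∧ p ≤ q * n ∧ p.Prime ∧ q ∣ p - 1 := fun p hp => by
    simpa [hS, and_assoc] using hp
  set P := ∏ j ∈ Finset.range n, (q * j + 1) with hP
  set v := n.factorial.factorization q with hv
  set m := n.factorial / q ^ v with hm
  have hfac : q ^ v * m = n.factorial := Nat.ordProj_mul_ordCompl_eq_self _ _
  have hmd : m ∣ n.factorial := ⟨q ^ v, by rw [← hfac, mul_comm]⟩
  have hqm : Nat.Coprime q m := Nat.coprime_ordCompl hq (Nat.factorial_ne_zero n)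
  have h1 : ∏ p ∈ S, p ∣ P := by
    refine Finset.prod_primes_dvd _ (fun p hp => (hmem p hp).2.2.1.prime) fun p hp => ?_
    obtain ⟨h1, h2, h3, j, hj⟩ := hmem p hp
    have hp2 := h3.two_le
    have hpj : p = q * j + 1 := by omega
    have hjn : j < n := by
      by_contra hcon
      have : q * n ≤ q * j := Nat.mul_le_mul_left q (by omega)
      omega
    rw [hpj]
    exact Finset.dvd_prod_of_mem (fun j => q * j + 1) (Finset.mem_range.mpr hjn)
  have h2 : m ∣ P := dvd_prod_progression q n m hmd hqm
  have h3 : Nat.Coprime (∏ p ∈ S, p) m := by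
    refine Nat.Coprime.prod_left fun p hp => ?_
    obtain ⟨h1, -, h3, -⟩ := hmem p hp
    refine (Nat.Prime.coprime_iff_not_dvd h3).mpr fun h => ?_
    have := (Nat.Prime.dvd_factorial h3).mp (h.trans hmd)
    omega
  have h4 : (∏ p ∈ S, p) * m ∣ P := h3.mul_dvd_of_dvd_of_dvd h1 h2
  have hP0 : 0 < P := Finset.prod_pos fun j _ => by omega
  have hm0 : 0 < m := Nat.pos_of_ne_zero fun h => Nat.factorial_ne_zero n (by rw [← hfac, h, mul_zero])
  have hvn : v ≤ n := by
    haveI : Fact q.Prime := ⟨hq⟩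
    have := sub_one_mul_padicValNat_factorial (p := q) n
    rw [hv, Nat.factorization_def _ hq]
    have h5 : 1 * padicValNat q n.factorial ≤ (q - 1) * padicValNat q n.factorial :=
      Nat.mul_le_mul_right _ (by have := hq.two_le; omega)
    omega
  have h5 := (Nat.le_of_dvd hP0 h4).trans (prod_progression_le q n hq.one_le)
  rw [← hfac, ← mul_assoc, ← pow_add] at h5
  refine (Nat.le_of_mul_le_mul_right h5 hm0).trans ?_
  exact Nat.pow_le_pow_right hq.pos (by omega)

/-- Chebyshev-type function for primes `≡ 1 mod q`. -/
noncomputable def thetaAP (q x : ℕ) : ℝ := ∑ p ∈ (Finset.Icc 1 x) with p.Prime ∧ q ∣ p - 1, Real.log p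

lemma thetaAP_mono (q : ℕ) : Monotone (thetaAP q) := fun a b hab => by
  refine Finset.sum_le_sum_of_subset_of_nonneg ?_ fun i _ _ => Real.log_natCast_nonneg i
  exact Finset.filter_subset_filter _ (Finset.Icc_subset_Icc le_rfl hab)

lemma thetaAP_step (q n : ℕ) (hq : q.Prime) :
    thetaAP q (q * n) ≤ thetaAP q n + 2 * n * Real.log q := by
  have h := prod_primes_progression_le q n hq
  have hnq : n ≤ q * n := Nat.le_mul_of_pos_left n hq.pos
  have e : thetaAP q (q * n) = thetaAP q n +
      ∑ p ∈ (Finset.Ioc n (q * n)) with p.Prime ∧ q ∣ p - 1, Real.log p := by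
    unfold thetaAP
    rw [← Finset.sum_union]
    · congr 1
      ext p
      simp only [Finset.mem_filter, Finset.mem_Icc, Finset.mem_union, Finset.mem_Ioc]
      constructor
      · rintro ⟨⟨a, b⟩, c⟩
        by_cases hh : p ≤ n
        · exact Or.inl ⟨⟨a, hh⟩, c⟩
        · exact Or.inr ⟨⟨by omega, b⟩, c⟩
      · rintro (⟨⟨a, b⟩, c⟩ | ⟨⟨a, b⟩, c⟩)
        · exact ⟨⟨a, by omega⟩, c⟩
        · exact ⟨⟨by omega, b⟩, c⟩
    · rw [Finset.disjoint_left]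
      intro p hp
      simp only [Finset.mem_filter, Finset.mem_Icc, Finset.mem_Ioc] at hp ⊢
      omega
  rw [e, ← Real.log_prod (fun p hp => by
    have := (Finset.mem_filter.mp hp).2.1.pos
    positivity)]
  have h2 : Real.log (∏ p ∈ (Finset.Ioc n (q * n)) with p.Prime ∧ q ∣ p - 1, (p : ℝ)) ≤
      Real.log ((q : ℝ) ^ (2 * n)) := by
    refine Real.log_le_log ?_ ?_
    · refine Finset.prod_pos fun p hp => ?_
      have := (Finset.mem_filter.mp hp).2.1.pos
      positivity
    · have h' := (Nat.cast_le (α := ℝ)).mpr h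
      rw [Nat.cast_prod, Nat.cast_pow] at h'
      exact h'
  rw [Real.log_pow] at h2
  push_cast at h2
  linarith

lemma thetaAP_le (q : ℕ) (hq : q.Prime) (hq4 : 4 ≤ q) (x : ℕ) :
    thetaAP q x ≤ 8 * x * Real.log q / q := by
  have hqR : (4 : ℝ) ≤ q := by exact_mod_cast hq4
  have hlq : 0 < Real.log q := Real.log_pos (by linarith)
  induction x using Nat.strong_induction_on with
  | _ x ih =>
    rcases Nat.lt_or_ge x q with h | h
    · have : thetaAP q x = 0 := by
        unfold thetaAP
        rw [Finset.filter_false_of_mem, Finset.sum_empty]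
        intro p hp ⟨h1, h2⟩
        have hp2 := h1.two_le
        have := Nat.le_of_dvd (by omega) h2
        have := (Finset.mem_Icc.mp hp).2
        omega
      rw [this]
      positivity
    set n := (x + q - 1) / q with hn
    have hn1 : x ≤ q * n := by
      have h1 := Nat.div_add_mod (x + q - 1) q
      have h2 := Nat.mod_lt (x + q - 1) hq.pos
      rw [← hn] at h1
      omega
    have hn2 : q * n ≤ x + q - 1 := Nat.mul_div_le _ _
    have hnx : n < x := by
      by_contra hcon
      have : q * x ≤ q * n := Nat.mul_le_mul_left q (by omega)
      have : 4 * x ≤ q * x := Nat.mul_le_mul_right x hq4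
      omega
    have hn3 : (q : ℝ) * n ≤ 2 * x := by
      have : q * n ≤ 2 * x := by omega
      exact_mod_cast this
    have h1 := ih n hnx
    have h2 := thetaAP_step q n hq
    have h3 := thetaAP_mono q hn1
    have hn4 : (n : ℝ) ≤ 2 * x / q := by
      rw [le_div_iff₀ (by linarith)]; linarith
    calc thetaAP q x ≤ 8 * n * Real.log q / q + 2 * n * Real.log q := by linarith
      _ = (8 / q + 2) * n * Real.log q := by ring
      _ ≤ (2 + 2) * (2 * x / q) * Real.log q := by
          gcongr
          rw [div_le_iff₀ (by linarith)]
          linarith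
      _ = 8 * x * Real.log q / q := by ring

lemma card_AP_le (q : ℕ) (hq : q.Prime) (hq4 : 4 ≤ q) (x : ℕ) (hx : 2 ≤ x) :
    ((((Nat.primesLE x).filter fun p => q ∣ p - 1).card : ℕ) : ℝ) ≤
      18 * (x / Real.log x) * (Real.log q / q) := by
  have hqR : (4 : ℝ) ≤ q := by exact_mod_cast hq4
  have hxR : (2 : ℝ) ≤ x := by exact_mod_cast hx
  have hlx : 0 < Real.log x := Real.log_pos (by linarith)
  have hlq : 1 ≤ Real.log q := by
    rw [Real.le_log_iff_exp_le (by linarith)]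
    linarith [Real.exp_one_lt_three]
  rw [Nat.primesLE_eq_filter_Icc_one, Finset.filter_filter]
  set S := (Finset.Icc 1 x).filter fun p => p.Prime ∧ q ∣ p - 1 with hS
  rw [← Finset.card_filter_add_card_filter_not (s := S) (fun p => p ≤ Nat.sqrt x)]
  have h1 : (S.filter fun p => p ≤ Nat.sqrt x).card ≤ Nat.sqrt x / q := by
    have : (S.filter fun p => p ≤ Nat.sqrt x).card ≤ (Finset.Icc 1 (Nat.sqrt x / q)).card := by
      refine Finset.card_le_card_of_injOn (fun p => (p - 1) / q) ?_ ?_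
      · intro p hp
        simp only [hS, Finset.coe_filter, Finset.mem_filter, Finset.mem_Icc, Set.mem_ofPred_eq] at hp
        obtain ⟨⟨⟨a, b⟩, c, d⟩, e⟩ := hp
        have hp2 := c.two_le
        simp only [Finset.coe_Icc, Set.mem_Icc]
        refine ⟨Nat.div_pos (Nat.le_of_dvd (by omega) d) hq.pos, Nat.div_le_div_right (by omega)⟩
      · intro p hp p' hp' hh
        simp only [hS, Finset.coe_filter, Finset.mem_filter, Finset.mem_Icc, Set.mem_ofPred_eq] at hp hp'
        simp only at hh
        have e1 := Nat.div_mul_cancel hp.1.2.2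
        have e2 := Nat.div_mul_cancel hp'.1.2.2
        rw [hh, e2] at e1
        have := hp.1.2.1.two_le
        have := hp'.1.2.1.two_le
        omega
    simpa using this
  have h1' : ((S.filter fun p => p ≤ Nat.sqrt x).card : ℝ) ≤ Real.sqrt x / q := by
    have a : ((S.filter fun p => p ≤ Nat.sqrt x).card : ℝ) ≤ ((Nat.sqrt x / q : ℕ) : ℝ) := by exact_mod_cast h1
    refine a.trans (Nat.cast_div_le.trans ?_)
    gcongr
    exact Real.nat_sqrt_le_real_sqrt
  have hsq : Real.sqrt x ≤ 2 * (x / Real.log x) := by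
    have hs : 0 < Real.sqrt x := Real.sqrt_pos.mpr (by linarith)
    have a : Real.log x ≤ 2 * Real.sqrt x := by
      have e := Real.log_sqrt (x := (x : ℝ)) (by linarith)
      have := Real.log_le_self hs.le
      linarith
    have e2 := Real.mul_self_sqrt (x := (x : ℝ)) (by linarith)
    rw [mul_div_assoc', le_div_iff₀ hlx]
    nlinarith
  have h2 : ((S.filter fun p => ¬ p ≤ Nat.sqrt x).card : ℝ) * (Real.log x / 2) ≤ thetaAP q x := by
    calc _ = ∑ p ∈ S.filter (fun p => ¬ p ≤ Nat.sqrt x), Real.log x / 2 := by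
          rw [Finset.sum_const, nsmul_eq_mul]
      _ ≤ ∑ p ∈ S.filter (fun p => ¬ p ≤ Nat.sqrt x), Real.log p := by
          refine Finset.sum_le_sum fun p hp => ?_
          have hp' := (Finset.mem_filter.mp hp).2
          rw [Nat.le_sqrt, not_le] at hp'
          have hp0 : 0 < p := Nat.pos_of_ne_zero fun h => by simp [h] at hp'
          have : Real.log x ≤ Real.log ((p : ℝ) * p) :=
            Real.log_le_log (by linarith) (by exact_mod_cast hp'.le)
          rw [Real.log_mul (by positivity) (by positivity)] at this
          linarith
      _ ≤ thetaAP q x :=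
          Finset.sum_le_sum_of_subset_of_nonneg (Finset.filter_subset _ _) fun i _ _ =>
            Real.log_natCast_nonneg i
  have h3 : ((S.filter fun p => ¬ p ≤ Nat.sqrt x).card : ℝ) ≤ 16 * (x / Real.log x) * (Real.log q / q) := by
    have := h2.trans (thetaAP_le q hq hq4 x)
    have e : 16 * (x / Real.log x) * (Real.log q / q) = (8 * x * Real.log q / q) / (Real.log x / 2) := by
      field_simp; norm_num
    rw [e, le_div_iff₀ (by positivity)]
    exact this
  have h4 : Real.sqrt x / q ≤ 2 * (x / Real.log x) * (Real.log q / q) := by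
    calc Real.sqrt x / q = Real.sqrt x * (1 / q) := by ring
      _ ≤ 2 * (x / Real.log x) * (Real.log q / q) := by gcongr
  push_cast
  linarith

lemma totient_prod_primes (T : Finset ℕ) (hT : ∀ q ∈ T, q.Prime) :
    (((∏ q ∈ T, q).totient : ℕ) : ℝ) = ∏ q ∈ T, ((q : ℝ) - 1) := by
  induction T using Finset.induction_on with
  | empty => simp
  | insert a T ha ih =>
    rw [Finset.prod_insert ha, Finset.prod_insert ha, Nat.totient_mul, Nat.cast_mul,
      ih fun q hq => hT q (Finset.mem_insert_of_mem hq)]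
    · rw [Nat.totient_prime (hT a (Finset.mem_insert_self _ _)),
        Nat.cast_sub (hT a (Finset.mem_insert_self _ _)).one_le, Nat.cast_one]
    · refine Nat.Coprime.prod_right fun q hq => ?_
      refine (Nat.coprime_primes (hT a (Finset.mem_insert_self _ _))
        (hT q (Finset.mem_insert_of_mem hq))).mpr fun h => ha (h ▸ hq)

/-- Truncated local factor. -/
noncomputable def truncF (r Q n : ℕ) : ℝ :=
  ∏ q ∈ Nat.primesLE Q, (1 + if q ∣ n then -((q : ℝ) ^ r)⁻¹ else 0)

lemma prod_primes_dvd_iff (T : Finset ℕ) (hT : ∀ q ∈ T, q.Prime) (n : ℕ) :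
    (∏ q ∈ T, q) ∣ n ↔ ∀ q ∈ T, q ∣ n :=
  ⟨fun h _ hq => (Finset.dvd_prod_of_mem (fun q => q) hq).trans h,
    fun h => Finset.prod_primes_dvd n (fun q hq => (hT q hq).prime) h⟩

lemma prod_ite_dvd (T : Finset ℕ) (hT : ∀ q ∈ T, q.Prime) (n : ℕ) (f : ℕ → ℝ) :
    ∏ q ∈ T, (if q ∣ n then f q else 0) = if (∏ q ∈ T, q) ∣ n then ∏ q ∈ T, f q else 0 := by
  split_ifs with h <;> rw [prod_primes_dvd_iff T hT] at h
  · exact Finset.prod_congr rfl fun q hq => if_pos (h q hq)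
  · push Not at h
    obtain ⟨q, hq, hqn⟩ := h
    exact Finset.prod_eq_zero hq (if_neg hqn)

lemma prime_of_mem_primesLE {q Q : ℕ} (h : q ∈ Nat.primesLE Q) : q.Prime := by
  rw [Nat.primesLE_eq_filter_Icc_one] at h
  exact (Finset.mem_filter.mp h).2

lemma le_of_mem_primesLE {q Q : ℕ} (h : q ∈ Nat.primesLE Q) : q ≤ Q := by
  rw [Nat.primesLE_eq_filter_Icc_one] at h
  exact (Finset.mem_Icc.mp (Finset.mem_filter.mp h).1).2

lemma mem_primesLE_of {q Q : ℕ} (h : q.Prime) (h2 : q ≤ Q) : q ∈ Nat.primesLE Q := by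
  rw [Nat.primesLE_eq_filter_Icc_one]
  exact Finset.mem_filter.mpr ⟨Finset.mem_Icc.mpr ⟨h.one_le, h2⟩, h⟩

lemma sum_truncF_eq (k r Q x : ℕ) :
    ∑ p ∈ Nat.primesLE x, wt k r p * truncF r Q (p - 1) =
      ∑ T ∈ (Nat.primesLE Q).powerset, (∏ q ∈ T, -((q : ℝ) ^ r)⁻¹) * apSum k r (∏ q ∈ T, q) x := by
  simp only [truncF, Finset.prod_one_add, Finset.mul_sum]
  rw [Finset.sum_comm]
  refine Finset.sum_congr rfl fun T hT => ?_
  have hT' : ∀ q ∈ T, q.Prime := fun q hq => prime_of_mem_primesLE (Finset.mem_powerset.mp hT hq)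
  rw [apSum, Finset.mul_sum, Finset.sum_filter]
  refine Finset.sum_congr rfl fun p _ => ?_
  rw [prod_ite_dvd T hT']
  split_ifs <;> ring

lemma sum_truncF_tendsto (k r Q : ℕ) (hr : 1 ≤ r) :
    Tendsto (fun x : ℕ => (∑ p ∈ Nat.primesLE x, wt k r p * truncF r Q (p - 1)) / apSum k r 1 x)
      atTop (nhds (∏ q ∈ Nat.primesLE Q, (1 - 1 / ((q : ℝ) ^ r * ((q : ℝ) - 1))))) := by
  have e : ∏ q ∈ Nat.primesLE Q, (1 - 1 / ((q : ℝ) ^ r * ((q : ℝ) - 1))) =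
      ∑ T ∈ (Nat.primesLE Q).powerset, (∏ q ∈ T, -((q : ℝ) ^ r)⁻¹) *
        (((∏ q ∈ T, q).totient : ℕ) : ℝ)⁻¹ := by
    have e1 : ∀ q : ℕ, 1 - 1 / ((q : ℝ) ^ r * ((q : ℝ) - 1)) =
        1 + (-((q : ℝ) ^ r)⁻¹ * ((q : ℝ) - 1)⁻¹) := fun q => by
      rw [one_div, mul_inv]; ring
    simp only [e1, Finset.prod_one_add]
    refine Finset.sum_congr rfl fun T hT => ?_
    rw [totient_prod_primes T fun q hq => prime_of_mem_primesLE (Finset.mem_powerset.mp hT hq),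
      Finset.prod_mul_distrib, Finset.prod_inv_distrib]
  rw [e]
  simp only [sum_truncF_eq, Finset.sum_div, mul_div_assoc]
  refine tendsto_finsetSum _ fun T hT => ?_
  refine (apSum_ratio k r _ hr ?_).const_mul _
  exact Finset.prod_ne_zero_iff.mpr fun q hq =>
    (prime_of_mem_primesLE (Finset.mem_powerset.mp hT hq)).ne_zero

lemma one_sub_prod_le (S : Finset ℕ) (a : ℕ → ℝ) (h0 : ∀ q ∈ S, 0 ≤ a q) (h1 : ∀ q ∈ S, a q ≤ 1) :
    1 - ∏ q ∈ S, (1 - a q) ≤ ∑ q ∈ S, a q := by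
  induction S using Finset.induction_on with
  | empty => simp
  | insert b S hb ih =>
    have ih' := ih (fun q hq => h0 q (Finset.mem_insert_of_mem hq))
      (fun q hq => h1 q (Finset.mem_insert_of_mem hq))
    rw [Finset.prod_insert hb, Finset.sum_insert hb]
    have hb0 := h0 b (Finset.mem_insert_self _ _)
    have hP : ∏ q ∈ S, (1 - a q) ≤ 1 := Finset.prod_le_one
      (fun q hq => by linarith [h1 q (Finset.mem_insert_of_mem hq)])
      (fun q hq => by linarith [h0 q (Finset.mem_insert_of_mem hq)])
    nlinarith

/-- Full local factor. -/
noncomputable def fullF (r n : ℕ) : ℝ := ∏ q ∈ n.primeFactors, (1 - ((q : ℝ) ^ r)⁻¹)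

lemma truncF_eq (r Q n : ℕ) (hn : n ≠ 0) :
    truncF r Q n = ∏ q ∈ n.primeFactors with q ≤ Q, (1 - ((q : ℝ) ^ r)⁻¹) := by
  have : n.primeFactors.filter (fun q => q ≤ Q) = (Nat.primesLE Q).filter fun q => q ∣ n := by
    ext q
    simp only [Finset.mem_filter, Nat.mem_primeFactors]
    constructor
    · rintro ⟨⟨a, b, c⟩, d⟩
      exact ⟨mem_primesLE_of a d, b⟩
    · rintro ⟨a, b⟩
      exact ⟨⟨prime_of_mem_primesLE a, b, hn⟩, le_of_mem_primesLE a⟩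
  rw [this, Finset.prod_filter, truncF]
  refine Finset.prod_congr rfl fun q _ => ?_
  split_ifs <;> ring

lemma abs_fullF_sub_truncF_le (r Q n : ℕ) (hr : 1 ≤ r) (hn : n ≠ 0) :
    |fullF r n - truncF r Q n| ≤ ∑ q ∈ n.primeFactors with ¬ q ≤ Q, (q : ℝ)⁻¹ := by
  have hq1 : ∀ q ∈ n.primeFactors, ((q : ℝ) ^ r)⁻¹ ≤ (q : ℝ)⁻¹ ∧ (q : ℝ)⁻¹ ≤ 1 := fun q hq => by
    have h1 : (1 : ℝ) ≤ q := by exact_mod_cast (Nat.prime_of_mem_primeFactors hq).one_le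
    exact ⟨inv_anti₀ (by linarith) (le_self_pow₀ h1 (by omega)), inv_le_one_of_one_le₀ h1⟩
  rw [truncF_eq r Q n hn, fullF, ← Finset.prod_filter_mul_prod_filter_not n.primeFactors (fun q => q ≤ Q)]
  have hA1 : ∏ q ∈ n.primeFactors with q ≤ Q, (1 - ((q : ℝ) ^ r)⁻¹) ≤ 1 := Finset.prod_le_one
      (fun q hq => by have := hq1 q (Finset.mem_filter.mp hq).1; linarith)
      (fun q hq => by have : 0 ≤ ((q : ℝ) ^ r)⁻¹ := by positivity
                      linarith)
  have hA0 : 0 ≤ ∏ q ∈ n.primeFactors with q ≤ Q, (1 - ((q : ℝ) ^ r)⁻¹) := Finset.prod_nonneg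
      (fun q hq => by have := hq1 q (Finset.mem_filter.mp hq).1; linarith)
  have hB1 : ∏ q ∈ n.primeFactors with ¬ q ≤ Q, (1 - ((q : ℝ) ^ r)⁻¹) ≤ 1 := Finset.prod_le_one
      (fun q hq => by have := hq1 q (Finset.mem_filter.mp hq).1; linarith)
      (fun q hq => by have : 0 ≤ ((q : ℝ) ^ r)⁻¹ := by positivity
                      linarith)
  have hB := one_sub_prod_le (n.primeFactors.filter fun q => ¬ q ≤ Q) (fun q => ((q : ℝ) ^ r)⁻¹)
    (fun q hq => by positivity) (fun q hq => by have := hq1 q (Finset.mem_filter.mp hq).1; linarith)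
  have hC : ∑ q ∈ n.primeFactors with ¬ q ≤ Q, ((q : ℝ) ^ r)⁻¹ ≤
      ∑ q ∈ n.primeFactors with ¬ q ≤ Q, (q : ℝ)⁻¹ :=
    Finset.sum_le_sum fun q hq => (hq1 q (Finset.mem_filter.mp hq).1).1
  rw [abs_le]
  constructor <;> nlinarith

lemma jordanTotient_eq_conv (r n : ℕ) (hr : 1 ≤ r) :
    jordanTotient r n = (ArithmeticFunction.moebius *
      ((ArithmeticFunction.pow r : ArithmeticFunction ℕ) : ArithmeticFunction ℤ)) n := by
  rw [ArithmeticFunction.mul_apply, Nat.sum_divisorsAntidiagonal' (fun a b =>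
    ArithmeticFunction.moebius a * ((ArithmeticFunction.pow r : ArithmeticFunction ℕ) : ArithmeticFunction ℤ) b)]
  unfold jordanTotient
  refine Finset.sum_congr rfl fun d _ => ?_
  rw [ArithmeticFunction.natCoe_apply, ArithmeticFunction.pow_apply, if_neg (by omega)]
  push_cast
  rfl

lemma jordanTotient_mul (r a b : ℕ) (hr : 1 ≤ r) (hab : Nat.Coprime a b) :
    jordanTotient r (a * b) = jordanTotient r a * jordanTotient r b := by
  simp only [jordanTotient_eq_conv r _ hr]
  exact (ArithmeticFunction.isMultiplicative_moebius.mul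
    ArithmeticFunction.isMultiplicative_pow.natCast).map_mul_of_coprime hab

lemma jordanTotient_prime_pow (r p n : ℕ) (hp : p.Prime) :
    jordanTotient r (p ^ (n + 1)) = ((p : ℤ) ^ (n + 1)) ^ r - ((p : ℤ) ^ n) ^ r := by
  unfold jordanTotient
  rw [Nat.sum_divisors_prime_pow hp, Finset.sum_range_succ, Finset.sum_range_succ]
  have h0 : ∑ i ∈ Finset.range n, ArithmeticFunction.moebius (p ^ (n + 1) / p ^ i) * ((p ^ i : ℕ) : ℤ) ^ r = 0 := by
    refine Finset.sum_eq_zero fun i hi => ?_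
    have hi' := Finset.mem_range.mp hi
    rw [Nat.pow_div (by omega) hp.pos, ArithmeticFunction.moebius_apply_prime_pow hp (by omega),
      if_neg (by omega), zero_mul]
  rw [h0, Nat.pow_div (by omega) hp.pos, Nat.pow_div (by omega) hp.pos]
  have e1 : n + 1 - n = 1 := by omega
  have e2 : n + 1 - (n + 1) = 0 := by omega
  rw [e1, e2, pow_one, pow_zero, ArithmeticFunction.moebius_apply_prime hp,
    ArithmeticFunction.moebius_apply_one]
  push_cast
  ring

lemma jordanTotient_eq (r n : ℕ) (hr : 1 ≤ r) (hn : n ≠ 0) :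
    (jordanTotient r n : ℝ) = (n : ℝ) ^ r * fullF r n := by
  induction n using Nat.recOnPosPrimePosCoprime with
  | zero => exact absurd rfl hn
  | one => simp [jordanTotient, fullF]
  | prime_pow p n hp hn0 =>
    obtain ⟨m, rfl⟩ : ∃ m, n = m + 1 := ⟨n - 1, by omega⟩
    rw [jordanTotient_prime_pow r p m hp, fullF, Nat.primeFactors_prime_pow (by omega) hp,
      Finset.prod_singleton]
    have : (p : ℝ) ≠ 0 := by exact_mod_cast hp.ne_zero
    push_cast
    field_simp
    ring
  | coprime a b ha hb hab iha ihb =>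
    rw [jordanTotient_mul r a b hr hab, Int.cast_mul, iha (by omega), ihb (by omega), fullF, fullF,
      fullF, hab.primeFactors_mul, Finset.prod_union hab.disjoint_primeFactors]
    push_cast
    ring

lemma summable_log_div_sq : Summable fun n : ℕ => Real.log n / (n : ℝ) ^ 2 := by
  have h : Summable fun n : ℕ => 2 * (1 / (n : ℝ) ^ (3 / 2 : ℝ)) :=
    (Real.summable_one_div_nat_rpow.mpr (by norm_num)).mul_left 2
  refine Summable.of_nonneg_of_le (fun n => div_nonneg (Real.log_natCast_nonneg n) (by positivity)) (fun n => ?_) h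
  rcases Nat.eq_zero_or_pos n with rfl | hn
  · simp
  have hn' : (0 : ℝ) < n := by exact_mod_cast hn
  have := Real.log_le_rpow_div hn'.le (show (0 : ℝ) < 1 / 2 by norm_num)
  have e : (n : ℝ) ^ 2 = (n : ℝ) ^ (1 / 2 : ℝ) * (n : ℝ) ^ (3 / 2 : ℝ) := by
    rw [← Real.rpow_add hn', ← Real.rpow_natCast]; norm_num
  have hp : 0 < (n : ℝ) ^ (1 / 2 : ℝ) := by positivity
  have hp3 : 0 < (n : ℝ) ^ (3 / 2 : ℝ) := by positivity
  rw [e, div_le_iff₀ (by positivity)]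
  calc _ ≤ _ := this
    _ = _ := by field_simp

lemma tail_bound (k r Q x : ℕ) (hQ : 4 ≤ Q) (hx : 2 ≤ x) :
    ∑ p ∈ Nat.primesLE x, wt k r p * ∑ q ∈ (p - 1).primeFactors with ¬ q ≤ Q, (q : ℝ)⁻¹ ≤
      18 * (x * wlog k r x) * ∑' n : ℕ, Real.log ((n + Q : ℕ) : ℝ) / ((n + Q : ℕ) : ℝ) ^ 2 := by
  have hxR : (2 : ℝ) ≤ x := by exact_mod_cast hx
  have hlx : 0 < Real.log x := Real.log_pos (by linarith)
  have hw := wt_nonneg k r x (by omega)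
  have hsub : ∀ p ∈ Nat.primesLE x, (p - 1).primeFactors.filter (fun q => ¬ q ≤ Q) =
      ((Nat.primesLE x).filter fun q => ¬ q ≤ Q).filter fun q => q ∣ p - 1 := fun p hp => by
    have hpp := (prime_of_mem_primesLE hp).two_le
    have hpx := le_of_mem_primesLE hp
    ext q
    simp only [Finset.mem_filter, Nat.mem_primeFactors]
    constructor
    · rintro ⟨⟨a, b, c⟩, d⟩
      exact ⟨⟨mem_primesLE_of a (by have := Nat.le_of_dvd (by omega) b; omega), d⟩, b⟩
    · rintro ⟨⟨a, b⟩, c⟩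
      exact ⟨⟨prime_of_mem_primesLE a, c, by omega⟩, b⟩
  calc _ ≤ ∑ p ∈ Nat.primesLE x, wt k r x * ∑ q ∈ (Nat.primesLE x) with ¬ q ≤ Q,
            (if q ∣ p - 1 then (q : ℝ)⁻¹ else 0) := by
        refine Finset.sum_le_sum fun p hp => ?_
        rw [hsub p hp, Finset.sum_filter]
        refine mul_le_mul_of_nonneg_right
          (wt_mono k r p x (prime_of_mem_primesLE hp).one_le (le_of_mem_primesLE hp)) ?_
        exact Finset.sum_nonneg fun q _ => by split_ifs <;> positivity
    _ = ∑ q ∈ (Nat.primesLE x) with ¬ q ≤ Q, wt k r x *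
          ((((Nat.primesLE x).filter fun p => q ∣ p - 1).card : ℕ) * (q : ℝ)⁻¹) := by
        rw [← Finset.mul_sum, Finset.sum_comm, ← Finset.mul_sum]
        congr 1
        refine Finset.sum_congr rfl fun q _ => ?_
        rw [← Finset.sum_filter, Finset.sum_const, nsmul_eq_mul]
    _ ≤ ∑ q ∈ (Nat.primesLE x) with ¬ q ≤ Q, 18 * (x * wlog k r x) * (Real.log q / (q : ℝ) ^ 2) := by
        refine Finset.sum_le_sum fun q hq => ?_
        obtain ⟨h1, h2⟩ := Finset.mem_filter.mp hq
        have h3 := card_AP_le q (prime_of_mem_primesLE h1) (by omega) x hx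
        calc _ ≤ wt k r x * (18 * (x / Real.log x) * (Real.log q / q) * (q : ℝ)⁻¹) := by gcongr
          _ = _ := by unfold wlog; ring
    _ ≤ _ := by
        rw [← Finset.mul_sum]
        have hwl : 0 ≤ wlog k r x := div_nonneg hw hlx.le
        refine mul_le_mul_of_nonneg_left ?_ (by positivity)
        have hs := (summable_nat_add_iff Q).mpr summable_log_div_sq
        calc _ ≤ ∑ n ∈ Finset.range x, Real.log ((n + Q : ℕ) : ℝ) / ((n + Q : ℕ) : ℝ) ^ 2 := by
              rw [← Finset.sum_image (s := Finset.range x) (g := fun n => n + Q)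
                (f := fun n : ℕ => Real.log (n : ℝ) / (n : ℝ) ^ 2) (fun a _ b _ h => by simpa using h)]
              refine Finset.sum_le_sum_of_subset_of_nonneg ?_ fun i _ _ =>
                div_nonneg (Real.log_natCast_nonneg i) (by positivity)
              intro q hq
              obtain ⟨h1, h2⟩ := Finset.mem_filter.mp hq
              have := le_of_mem_primesLE h1
              exact Finset.mem_image.mpr ⟨q - Q, Finset.mem_range.mpr (by omega), by omega⟩
          _ ≤ _ := hs.sum_le_tsum _ fun n _ => div_nonneg (Real.log_natCast_nonneg _) (by positivity)

lemma artin_partial_tendsto (r : ℕ) (hr : 1 ≤ r) :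
    Tendsto (fun Q : ℕ => ∏ q ∈ Nat.primesLE Q, (1 - 1 / ((q : ℝ) ^ r * ((q : ℝ) - 1)))) atTop
      (nhds (artinConstantRank r)) := by
  have hs0 : Summable fun n : ℕ => 2 * (1 / (n : ℝ) ^ 2) :=
    (Real.summable_one_div_nat_pow.mpr (by norm_num)).mul_left 2
  have hs1 : Summable fun p : Nat.Primes => 2 * (1 / ((p : ℕ) : ℝ) ^ 2) :=
    hs0.comp_injective (i := fun p : Nat.Primes => (p : ℕ)) Subtype.val_injective
  have hs2 : Summable fun p : Nat.Primes => -(1 / (((p : ℕ) : ℝ) ^ r * (((p : ℕ) : ℝ) - 1))) := by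
    refine Summable.neg (Summable.of_nonneg_of_le (fun p => ?_) (fun p => ?_) hs1)
    · have : (2 : ℝ) ≤ (p : ℕ) := by exact_mod_cast p.2.two_le
      have : (0 : ℝ) ≤ ((p : ℕ) : ℝ) - 1 := by linarith
      positivity
    · have h2 : (2 : ℝ) ≤ (p : ℕ) := by exact_mod_cast p.2.two_le
      have h3 : ((p : ℕ) : ℝ) ≤ ((p : ℕ) : ℝ) ^ r := le_self_pow₀ (by linarith) (by omega)
      rw [mul_one_div, div_le_div_iff₀ (mul_pos (by positivity) (by linarith)) (by positivity)]
      nlinarith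
  have hm := (Real.multipliable_one_add_of_summable hs2).hasProd
  simp only [← sub_eq_add_neg] at hm
  have ht : Tendsto (fun Q : ℕ => (Nat.primesLE Q).subtype Nat.Prime) atTop
      (atTop : Filter (Finset Nat.Primes)) := by
    refine tendsto_atTop_finset_of_monotone ?_ ?_
    · intro a b hab p hp
      rw [Finset.mem_subtype] at hp ⊢
      exact mem_primesLE_of p.2 ((le_of_mem_primesLE hp).trans hab)
    · intro p
      exact ⟨p, Finset.mem_subtype.mpr (mem_primesLE_of p.2 le_rfl)⟩
  have := hm.comp ht
  refine this.congr fun Q => ?_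
  exact Finset.prod_subtype_of_mem (fun q : ℕ => 1 - 1 / ((q : ℝ) ^ r * ((q : ℝ) - 1)))
    fun q hq => prime_of_mem_primesLE hq

lemma jordan_ratio_tendsto (k r : ℕ) (hr : 1 ≤ r) :
    Tendsto (fun x : ℕ => (∑ p ∈ Nat.primesLE x, wt k r p * fullF r (p - 1)) / apSum k r 1 x)
      atTop (nhds (artinConstantRank r)) := by
  obtain ⟨c, hc, hlow⟩ := apSum_one_lower k r hr
  rw [Metric.tendsto_atTop']
  intro ε hε
  have hτ := tendsto_sum_nat_add (fun n : ℕ => Real.log n / (n : ℝ) ^ 2)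
  have h1 : ∀ᶠ Q : ℕ in atTop, ∑' n : ℕ, Real.log ((n + Q : ℕ) : ℝ) / ((n + Q : ℕ) : ℝ) ^ 2 < ε / 3 * (c / 18) :=
    hτ.eventually_lt_const (by positivity)
  have h2 := (Metric.tendsto_nhds.mp (artin_partial_tendsto r hr)) (ε / 3) (by positivity)
  obtain ⟨Q, h1, h2, hQ⟩ := (h1.and (h2.and (eventually_ge_atTop 4))).exists
  have h3 := (Metric.tendsto_nhds.mp (sum_truncF_tendsto k r Q hr)) (ε / 3) (by positivity)
  have hev : ∀ᶠ x : ℕ in atTop, dist ((∑ p ∈ Nat.primesLE x, wt k r p * fullF r (p - 1)) /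
      apSum k r 1 x) (artinConstantRank r) < ε := by
    filter_upwards [h3, hlow, eventually_ge_atTop 2] with x h3 hl hx
    have hxR : (2 : ℝ) ≤ x := by exact_mod_cast hx
    have hlx : 0 < Real.log x := Real.log_pos (by linarith)
    have hwl : 0 < x * wlog k r x := mul_pos (by linarith) (div_pos (wt_pos k r x hx) hlx)
    have hD : 0 < apSum k r 1 x := lt_of_lt_of_le (by positivity) hl
    set τ := ∑' n : ℕ, Real.log ((n + Q : ℕ) : ℝ) / ((n + Q : ℕ) : ℝ) ^ 2 with hτdef
    have hdiff : |∑ p ∈ Nat.primesLE x, wt k r p * fullF r (p - 1) -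
        ∑ p ∈ Nat.primesLE x, wt k r p * truncF r Q (p - 1)| ≤ 18 * (x * wlog k r x) * τ := by
      refine le_trans ?_ (tail_bound k r Q x hQ hx)
      rw [← Finset.sum_sub_distrib]
      refine (Finset.abs_sum_le_sum_abs _ _).trans (Finset.sum_le_sum fun p hp => ?_)
      have hp2 := (prime_of_mem_primesLE hp).two_le
      have hw := wt_nonneg k r p (by omega)
      rw [← mul_sub, abs_mul, abs_of_nonneg hw]
      exact mul_le_mul_of_nonneg_left (abs_fullF_sub_truncF_le r Q (p - 1) hr (by omega)) hw
    have hd1 : |(∑ p ∈ Nat.primesLE x, wt k r p * fullF r (p - 1)) / apSum k r 1 x -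
        (∑ p ∈ Nat.primesLE x, wt k r p * truncF r Q (p - 1)) / apSum k r 1 x| < ε / 3 := by
      rw [← sub_div, abs_div, abs_of_pos hD, div_lt_iff₀ hD]
      calc _ ≤ 18 * (x * wlog k r x) * τ := hdiff
        _ < 18 * (x * wlog k r x) * (ε / 3 * (c / 18)) := by gcongr
        _ = ε / 3 * (c * (x * wlog k r x)) := by ring
        _ ≤ ε / 3 * apSum k r 1 x := by gcongr
    rw [← Real.dist_eq] at hd1
    have t1 := dist_triangle4 ((∑ p ∈ Nat.primesLE x, wt k r p * fullF r (p - 1)) / apSum k r 1 x)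
      ((∑ p ∈ Nat.primesLE x, wt k r p * truncF r Q (p - 1)) / apSum k r 1 x)
      (∏ q ∈ Nat.primesLE Q, (1 - 1 / ((q : ℝ) ^ r * ((q : ℝ) - 1)))) (artinConstantRank r)
    linarith
  obtain ⟨n, hn⟩ := eventually_atTop.mp hev
  exact ⟨n, fun m hm => hn m hm.le⟩

lemma sum_nth_prime (h : ℕ → ℝ) (N : ℕ) :
    ∑ i ∈ Finset.range N, h (Nat.nth Nat.Prime i) =
      ∑ p ∈ Nat.primesLE (Nat.nth Nat.Prime N - 1), h p := by
  have hinj : Function.Injective (Nat.nth Nat.Prime) := Nat.nth_injective Nat.infinite_setOfPred_prime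
  rw [← Finset.sum_image (g := Nat.nth Nat.Prime) (f := h) (fun a _ b _ hab => hinj hab)]
  refine Finset.sum_congr ?_ fun _ _ => rfl
  ext p
  rw [Finset.mem_image]
  constructor
  · rintro ⟨i, hi, rfl⟩
    have : Nat.nth Nat.Prime i < Nat.nth Nat.Prime N := Nat.nth_strictMono Nat.infinite_setOfPred_prime (Finset.mem_range.mp hi)
    exact mem_primesLE_of (Nat.prime_nth_prime i) (by omega)
  · intro hp
    have hpp := prime_of_mem_primesLE hp
    have hle := le_of_mem_primesLE hp
    have h2 := (Nat.prime_nth_prime N).two_le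
    have e : Nat.nth Nat.Prime (Nat.count Nat.Prime p) = p := Nat.nth_count hpp
    refine ⟨Nat.count Nat.Prime p, Finset.mem_range.mpr ?_, e⟩
    by_contra hcon
    have : Nat.nth Nat.Prime N ≤ Nat.nth Nat.Prime (Nat.count Nat.Prime p) :=
      (Nat.nth_strictMono Nat.infinite_setOfPred_prime).monotone (not_lt.mp hcon)
    omega

end Helpers

/-- For every `k ≥ 0` and `r ≥ 1`, the ratio
`(∑_{i=1}^N p_i^k J_r(p_i - 1)) / (∑_{i=1}^N p_i^k (p_i - 1)^r)` over the first `N` primes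
tends to the rank-`r` Artin constant. -/
theorem artin_rank_ratio_formula (k r : ℕ) (hr : 1 ≤ r) :
    Tendsto (fun N : ℕ =>
        (∑ i ∈ Finset.range N,
          (Nat.nth Nat.Prime i : ℝ) ^ k * (jordanTotient r (Nat.nth Nat.Prime i - 1) : ℝ)) /
        (∑ i ∈ Finset.range N,
          (Nat.nth Nat.Prime i : ℝ) ^ k * ((Nat.nth Nat.Prime i : ℝ) - 1) ^ r))
      atTop (nhds (artinConstantRank r)) := by
  have hx : Tendsto (fun N : ℕ => Nat.nth Nat.Prime N - 1) atTop atTop := by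
    refine tendsto_atTop_mono (fun N => ?_) tendsto_id
    have := Nat.add_two_le_nth_prime N
    simp only [id]
    omega
  refine ((jordan_ratio_tendsto k r hr).comp hx).congr fun N => ?_
  rw [Function.comp_apply]
  congr 1
  · rw [← sum_nth_prime (fun p => wt k r p * fullF r (p - 1)) N]
    refine Finset.sum_congr rfl fun i _ => ?_
    have hp := (Nat.prime_nth_prime i).two_le
    rw [jordanTotient_eq r _ hr (by omega), wt, Nat.cast_sub (by omega), Nat.cast_one, mul_assoc]
  · have e : apSum k r 1 (Nat.nth Nat.Prime N - 1) =
        ∑ p ∈ Nat.primesLE (Nat.nth Nat.Prime N - 1), wt k r p := by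
      rw [apSum, Finset.filter_true_of_mem fun p _ => one_dvd _]
    rw [e, ← sum_nth_prime (fun p => wt k r p) N]
    rfl
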